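/- arXiv:2511.09177 — 2 statements merged into one kernel-verified Lean document; each statement's English description precedes it below -/
import Mathlib

section
/- A minimizer of Newton's problem has no gradient of intermediate slope: if u : Ω → [0, M] is concave and minimizes J over all concave functions v : Ω → [0, M], then at every point x ∈ Ω at which u is differentiable, the norm of the gradient satisfies |∇u(x)| ∉ (0, 1), i.e., either ∇u(x) = 0 or |∇u(x)| ≥ 1. -/
open Set MeasureTheory

/-- The open unit disc in `ℝ²`. -/
noncomputable def Omega : Set (EuclideanSpace ℝ (Fin 2)) :=
  Metric.ball (0 : EuclideanSpace ℝ (Fin 2)) 1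

/-- Newton's resistance functional `J(u) = ∫_Ω 1/(|∇u|² + 1) dx`. -/
noncomputable def J (u : EuclideanSpace ℝ (Fin 2) → ℝ) : ℝ :=
  ∫ x in Omega, 1 / (‖gradient u x‖ ^ 2 + 1)

/-- If `f ≤ g` on an interval and `f` is concave, the total variation of `g` exceeds that of `f` up
to the discrepancy at the end points. -/
lemma integral_abs_deriv_sub_ge {f g : ℝ → ℝ} {a b : ℝ} {K L : NNReal} (hab : a ≤ b)
    (hf : LipschitzOnWith K f (Icc a b)) (hg : LipschitzOnWith L g (Icc a b))
    (hfc : ConcaveOn ℝ (Icc a b) f) (hfg : ∀ x ∈ Icc a b, f x ≤ g x) :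
    -(g a - f a) - (g b - f b) ≤ ∫ x in a..b, (|deriv g x| - |deriv f x|) := by
  obtain ⟨m, hm, hmax⟩ := isCompact_Icc.exists_isMaxOn (nonempty_Icc.2 hab) hf.continuousOn
  have sub1 : uIcc a m ⊆ Icc a b := by
    rw [uIcc_of_le hm.1]; exact Icc_subset_Icc_right hm.2
  have sub2 : uIcc m b ⊆ Icc a b := by
    rw [uIcc_of_le hm.2]; exact Icc_subset_Icc_left hm.1
  have f1 := (hf.mono sub1).absolutelyContinuousOnInterval
  have f2 := (hf.mono sub2).absolutelyContinuousOnInterval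
  have g1 := (hg.mono sub1).absolutelyContinuousOnInterval
  have g2 := (hg.mono sub2).absolutelyContinuousOnInterval
  have if1 := f1.intervalIntegrable_deriv
  have if2 := f2.intervalIntegrable_deriv
  have ig1 := g1.intervalIntegrable_deriv
  have ig2 := g2.intervalIntegrable_deriv
  have key1 : ∫ x in a..m, (deriv g x - deriv f x) ≤ ∫ x in a..m, (|deriv g x| - |deriv f x|) := by
    refine intervalIntegral.integral_mono_on_of_le_Ioo hm.1 (ig1.sub if1) (ig1.abs.sub if1.abs) ?_
    intro x hx
    have hpos : 0 ≤ deriv f x := by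
      by_cases hd : DifferentiableAt ℝ f x
      · have hxI : x ∈ Icc a b := ⟨hx.1.le, hx.2.le.trans hm.2⟩
        refine le_trans ?_ (hfc.slope_le_of_hasDerivAt hxI hm hx.2 hd.hasDerivAt)
        rw [slope_def_field]
        exact div_nonneg (sub_nonneg.2 (hmax hxI)) (sub_nonneg.2 hx.2.le)
      · rw [deriv_zero_of_not_differentiableAt hd]
    rw [abs_of_nonneg hpos]
    linarith [le_abs_self (deriv g x)]
  have key2 : ∫ x in m..b, (deriv f x - deriv g x) ≤ ∫ x in m..b, (|deriv g x| - |deriv f x|) := by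
    refine intervalIntegral.integral_mono_on_of_le_Ioo hm.2 (if2.sub ig2) (ig2.abs.sub if2.abs) ?_
    intro x hx
    have hneg : deriv f x ≤ 0 := by
      by_cases hd : DifferentiableAt ℝ f x
      · have hxI : x ∈ Icc a b := ⟨hm.1.trans hx.1.le, hx.2.le⟩
        refine le_trans (hfc.le_slope_of_hasDerivAt hm hxI hx.1 hd.hasDerivAt) ?_
        rw [slope_def_field]
        exact div_nonpos_of_nonpos_of_nonneg (sub_nonpos.2 (hmax hxI)) (sub_nonneg.2 hx.1.le)
      · rw [deriv_zero_of_not_differentiableAt hd]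
    rw [abs_of_nonpos hneg]
    linarith [neg_abs_le (deriv g x)]
  rw [intervalIntegral.integral_sub ig1 if1, g1.integral_deriv_eq_sub,
    f1.integral_deriv_eq_sub] at key1
  rw [intervalIntegral.integral_sub if2 ig2, g2.integral_deriv_eq_sub,
    f2.integral_deriv_eq_sub] at key2
  rw [← intervalIntegral.integral_add_adjacent_intervals (ig1.abs.sub if1.abs)
    (ig2.abs.sub if2.abs)]
  linarith [hfg m hm]

lemma measurable_gradient (f : EuclideanSpace ℝ (Fin 2) → ℝ) : Measurable (gradient f) :=
  (InnerProductSpace.toDual ℝ (EuclideanSpace ℝ (Fin 2))).symm.continuous.measurable.comp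
    (measurable_fderiv ℝ f)

lemma norm_gradient_le_of_lipschitzOn {f : EuclideanSpace ℝ (Fin 2) → ℝ}
    {s : Set (EuclideanSpace ℝ (Fin 2))} {x : EuclideanSpace ℝ (Fin 2)} {K : NNReal}
    (hs : s ∈ nhds x) (hf : LipschitzOnWith K f s) : ‖gradient f x‖ ≤ K := by
  rw [gradient, LinearIsometryEquiv.norm_map]
  exact norm_fderiv_le_of_lipschitzOn ℝ hs hf

lemma exists_integral_abs_inner_eq :
    ∃ C : ℝ, 0 < C ∧ ∀ p : EuclideanSpace ℝ (Fin 2),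
      ∫ t in (0 : ℝ)..2 * Real.pi, |inner ℝ p !₂[Real.cos t, Real.sin t]| = C * ‖p‖ := by
  refine ⟨∫ t in (0 : ℝ)..2 * Real.pi, |Real.cos t|, ?_, ?_⟩
  · have h : ∫ t in (0 : ℝ)..2 * Real.pi, Real.cos t ^ 2 = Real.pi := by
      rw [integral_cos_sq]; simp
    have h2 : ∫ t in (0 : ℝ)..2 * Real.pi, Real.cos t ^ 2 ≤
        ∫ t in (0 : ℝ)..2 * Real.pi, |Real.cos t| := by
      refine intervalIntegral.integral_mono_on (by positivity)
        (Continuous.intervalIntegrable (by fun_prop) _ _)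
        (Continuous.intervalIntegrable (by fun_prop) _ _) fun x _ => ?_
      rw [← sq_abs]
      nlinarith [abs_nonneg (Real.cos x), Real.abs_cos_le_one x]
    linarith [Real.pi_pos]
  · intro p
    have hn : ‖p‖ = ‖(⟨p 0, p 1⟩ : ℂ)‖ := by
      rw [EuclideanSpace.norm_eq, Complex.norm_def, Complex.normSq_mk, Fin.sum_univ_two]
      simp [sq]
    have hp (t : ℝ) : inner ℝ p !₂[Real.cos t, Real.sin t] =
        ‖p‖ * Real.cos (t + -Complex.arg ⟨p 0, p 1⟩) := by
      have h0 := Complex.norm_mul_cos_arg ⟨p 0, p 1⟩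
      have h1 := Complex.norm_mul_sin_arg ⟨p 0, p 1⟩
      simp only [PiLp.inner_apply, Fin.sum_univ_two, RCLike.inner_apply, conj_trivial]
      rw [Real.cos_add, Real.cos_neg, Real.sin_neg, hn]
      simp only [Matrix.cons_val_zero, Matrix.cons_val_one]
      linear_combination - Real.cos t * h0 - Real.sin t * h1
    simp_rw [hp, abs_mul, abs_norm]
    rw [intervalIntegral.integral_const_mul, mul_comm]
    congr 1
    rw [intervalIntegral.integral_comp_add_right (fun t => |Real.cos t|)]
    have hper : Function.Periodic (fun t => |Real.cos t|) (2 * Real.pi) := fun t => by simp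
    have := hper.intervalIntegral_add_eq (0 + -Complex.arg ⟨p 0, p 1⟩) 0
    rw [zero_add (2 * Real.pi)] at this
    rw [← this]
    congr 1
    ring

lemma exists_orthonormalBasis_apply_one_eq {e : EuclideanSpace ℝ (Fin 2)} (he : ‖e‖ = 1) :
    ∃ b : OrthonormalBasis (Fin 2) ℝ (EuclideanSpace ℝ (Fin 2)), b 1 = e := by
  have ho : Orthonormal ℝ (({1} : Set (Fin 2)).domRestrict fun _ => e) :=
    ⟨fun i => he, fun i j hij => absurd (Subsingleton.elim i j) hij⟩
  obtain ⟨b, hb⟩ := ho.exists_orthonormalBasis_extension_of_card_eq (by simp)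
  exact ⟨b, hb 1 rfl⟩

/-- Cartesian coordinates with respect to an orthonormal basis of the plane. -/
noncomputable def planeCoordinates
    (b : OrthonormalBasis (Fin 2) ℝ (EuclideanSpace ℝ (Fin 2))) :
    ℝ × ℝ ≃ᵐ EuclideanSpace ℝ (Fin 2) :=
  (MeasurableEquiv.finTwoArrow.symm.trans (MeasurableEquiv.toLp 2 (Fin 2 → ℝ))).trans
    b.measurableEquiv.symm

lemma planeCoordinates_apply (b : OrthonormalBasis (Fin 2) ℝ (EuclideanSpace ℝ (Fin 2)))
    (z : ℝ × ℝ) : planeCoordinates b z = z.1 • b 0 + z.2 • b 1 := by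
  have : planeCoordinates b z = b.repr.symm (WithLp.toLp 2 ![z.1, z.2]) := rfl
  rw [this, ← b.sum_repr_symm]
  simp

lemma measurePreserving_planeCoordinates
    (b : OrthonormalBasis (Fin 2) ℝ (EuclideanSpace ℝ (Fin 2))) :
    MeasurePreserving (planeCoordinates b) :=
  (((volume_preserving_finTwoArrow ℝ).symm).trans (PiLp.volume_preserving_toLp (Fin 2))).trans
    b.measurePreserving_repr_symm

lemma norm_planeCoordinates_sq (b : OrthonormalBasis (Fin 2) ℝ (EuclideanSpace ℝ (Fin 2)))
    (z : ℝ × ℝ) : ‖planeCoordinates b z‖ ^ 2 = z.1 ^ 2 + z.2 ^ 2 := by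
  have : planeCoordinates b z = b.repr.symm (WithLp.toLp 2 ![z.1, z.2]) := rfl
  rw [this, LinearIsometryEquiv.norm_map, EuclideanSpace.norm_sq_eq]
  simp

lemma hasDerivAt_planeCoordinates {f : EuclideanSpace ℝ (Fin 2) → ℝ}
    (b : OrthonormalBasis (Fin 2) ℝ (EuclideanSpace ℝ (Fin 2))) (t s : ℝ)
    (hf : DifferentiableAt ℝ f (planeCoordinates b (t, s))) :
    HasDerivAt (fun s => f (planeCoordinates b (t, s)))
      (inner ℝ (gradient f (planeCoordinates b (t, s))) (b 1)) s := by
  have h1 : HasDerivAt (fun s : ℝ => planeCoordinates b (t, s)) (b 1) s := by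
    simp only [planeCoordinates_apply]
    simpa using ((hasDerivAt_id s).smul_const (b 1)).const_add (t • b 0)
  rw [inner_gradient_left]
  exact hf.hasFDerivAt.comp_hasDerivAt s h1

lemma dist_planeCoordinates_snd (b : OrthonormalBasis (Fin 2) ℝ (EuclideanSpace ℝ (Fin 2)))
    (t s s' : ℝ) : dist (planeCoordinates b (t, s)) (planeCoordinates b (t, s')) = dist s s' := by
  simp only [planeCoordinates_apply, dist_eq_norm, add_sub_add_left_eq_sub, ← sub_smul, norm_smul,
    b.norm_eq_one, mul_one]

lemma planeCoordinates_mem_ball (b : OrthonormalBasis (Fin 2) ℝ (EuclideanSpace ℝ (Fin 2)))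
    {r : ℝ} (hr : 0 < r) (t s : ℝ) :
    planeCoordinates b (t, s) ∈ Metric.ball 0 r ↔
      s ∈ Ioo (-√(r ^ 2 - t ^ 2)) (√(r ^ 2 - t ^ 2)) := by
  rw [mem_ball_zero_iff, mem_Ioo, ← abs_lt, Real.lt_sqrt (abs_nonneg s), sq_abs,
    ← sq_lt_sq₀ (norm_nonneg _) hr.le, norm_planeCoordinates_sq]
  constructor <;> intro h <;> linarith

/-- Two ordered functions, the smaller being concave, on a disc: the integral over the disc of the
absolute value of the directional derivative is monotone, up to the discrepancy on the circle. -/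
lemma integral_abs_inner_gradient_sub_ge {f g : EuclideanSpace ℝ (Fin 2) → ℝ} {r η : ℝ}
    {K L : NNReal} (hr : 0 < r)
    (hf : LipschitzOnWith K f (Metric.closedBall 0 r))
    (hg : LipschitzOnWith L g (Metric.closedBall 0 r))
    (hfc : ConcaveOn ℝ (Metric.closedBall 0 r) f)
    (hfg : ∀ x ∈ Metric.closedBall 0 r, f x ≤ g x)
    (hη : ∀ x, ‖x‖ = r → g x - f x ≤ η) {e : EuclideanSpace ℝ (Fin 2)} (he : ‖e‖ = 1) :
    -(4 * η * r) ≤ ∫ x in Metric.ball 0 r,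
      (|inner ℝ (gradient g x) e| - |inner ℝ (gradient f x) e|) := by
  obtain ⟨b, rfl⟩ := exists_orthonormalBasis_apply_one_eq he
  set F : EuclideanSpace ℝ (Fin 2) → ℝ := fun x =>
    |inner ℝ (gradient g x) (b 1)| - |inner ℝ (gradient f x) (b 1)| with hF
  have hFm : Measurable F :=
    (((measurable_gradient g).inner_const).abs).sub (((measurable_gradient f).inner_const).abs)
  have hFb : ∀ x ∈ Metric.ball (0 : EuclideanSpace ℝ (Fin 2)) r, ‖F x‖ ≤ L + K := by
    intro x hx
    have hs : Metric.closedBall (0 : EuclideanSpace ℝ (Fin 2)) r ∈ nhds x :=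
      Filter.mem_of_superset (Metric.isOpen_ball.mem_nhds hx) Metric.ball_subset_closedBall
    have h1 := norm_gradient_le_of_lipschitzOn hs hf
    have h2 := norm_gradient_le_of_lipschitzOn hs hg
    have h3 := abs_real_inner_le_norm (gradient g x) (b 1)
    have h4 := abs_real_inner_le_norm (gradient f x) (b 1)
    rw [he, mul_one] at h3 h4
    rw [Real.norm_eq_abs, abs_le]
    constructor <;> simp only [hF] <;>
      linarith [abs_nonneg (inner ℝ (gradient g x) (b 1)),
        abs_nonneg (inner ℝ (gradient f x) (b 1))]
  have hFi : IntegrableOn F (Metric.ball 0 r) :=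
    IntegrableOn.of_bound measure_ball_lt_top hFm.aestronglyMeasurable.restrict (L + K)
      ((ae_restrict_iff' measurableSet_ball).2 (.of_forall hFb))
  have hdiff : ∀ᵐ x : EuclideanSpace ℝ (Fin 2), x ∈ Metric.ball 0 r →
      DifferentiableAt ℝ f x ∧ DifferentiableAt ℝ g x := by
    filter_upwards [hf.ae_differentiableWithinAt_of_mem, hg.ae_differentiableWithinAt_of_mem]
      with x h1 h2 hx
    have hs : Metric.closedBall (0 : EuclideanSpace ℝ (Fin 2)) r ∈ nhds x :=
      Filter.mem_of_superset (Metric.isOpen_ball.mem_nhds hx) Metric.ball_subset_closedBall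
    exact ⟨(h1 (mem_of_mem_nhds hs)).differentiableAt hs,
      (h2 (mem_of_mem_nhds hs)).differentiableAt hs⟩
  have hΦ := measurePreserving_planeCoordinates b
  have hprod : Integrable (fun z => (Metric.ball 0 r).indicator F (planeCoordinates b z))
      ((volume : Measure ℝ).prod volume) :=
    hΦ.integrable_comp_of_integrable ((integrable_indicator_iff measurableSet_ball).2 hFi)
  have hdiff' := Measure.ae_ae_of_ae_prod (hΦ.quasiMeasurePreserving.ae hdiff)
  rw [← integral_indicator measurableSet_ball, ← hΦ.integral_comp', Measure.volume_eq_prod,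
    integral_prod _ hprod]
  have hlow : ∫ t : ℝ, (Ioo (-r) r).indicator (fun _ => -(2 * η)) t = -(4 * η * r) := by
    rw [integral_indicator measurableSet_Ioo, setIntegral_const, measureReal_def, Real.volume_Ioo,
      ENNReal.toReal_ofReal (by linarith), smul_eq_mul]
    ring
  rw [← hlow]
  refine integral_mono_ae ((integrable_indicator_iff measurableSet_Ioo).2 (integrable_const _))
    hprod.integral_prod_left ?_
  filter_upwards [hdiff'] with t ht
  set l := √(r ^ 2 - t ^ 2) with hl
  have hslice : (fun s => (Metric.ball 0 r).indicator F (planeCoordinates b (t, s))) =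
      (Ioo (-l) l).indicator fun s => F (planeCoordinates b (t, s)) := by
    ext s
    by_cases hs : s ∈ Ioo (-l) l
    · rw [indicator_of_mem hs, indicator_of_mem ((planeCoordinates_mem_ball b hr t s).2 hs)]
    · rw [indicator_of_notMem hs,
        indicator_of_notMem (mt (planeCoordinates_mem_ball b hr t s).1 hs)]
  rw [hslice, integral_indicator measurableSet_Ioo]
  by_cases htr : t ∈ Ioo (-r) r
  · rw [indicator_of_mem htr]
    have hpos : 0 ≤ r ^ 2 - t ^ 2 := by nlinarith [htr.1, htr.2]
    have hl0 : 0 ≤ l := Real.sqrt_nonneg _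
    have hl2 : l ^ 2 = r ^ 2 - t ^ 2 := Real.sq_sqrt hpos
    have hmaps : MapsTo (fun s => planeCoordinates b (t, s)) (Icc (-l) l)
        (Metric.closedBall 0 r) := by
      intro s hs
      rw [mem_closedBall_zero_iff, ← sq_le_sq₀ (norm_nonneg _) hr.le, norm_planeCoordinates_sq]
      nlinarith [hs.1, hs.2]
    have hlip : LipschitzOnWith 1 (fun s => planeCoordinates b (t, s)) (Icc (-l) l) :=
      LipschitzOnWith.of_dist_le_mul fun s _ s' _ => by simp [dist_planeCoordinates_snd]
    have hend (s : ℝ) (hs : s ^ 2 = l ^ 2) : ‖planeCoordinates b (t, s)‖ = r := by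
      rw [← sq_eq_sq₀ (norm_nonneg _) hr.le, norm_planeCoordinates_sq]
      linarith
    have hconc : ConcaveOn ℝ (Icc (-l) l) fun s => f (planeCoordinates b (t, s)) := by
      refine ⟨convex_Icc _ _, fun s hs s' hs' α β hα hβ hαβ => ?_⟩
      convert hfc.2 (hmaps hs) (hmaps hs') hα hβ hαβ using 2
      simp only [planeCoordinates_apply, smul_eq_mul]
      obtain rfl : β = 1 - α := by linarith
      module
    have hone := integral_abs_deriv_sub_ge (by linarith) (hf.comp hlip hmaps)
      (hg.comp hlip hmaps) hconc (fun s hs => hfg _ (hmaps hs))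
    have hle : ∫ s in (-l)..l, (|deriv (g ∘ fun s => planeCoordinates b (t, s)) s| -
        |deriv (f ∘ fun s => planeCoordinates b (t, s)) s|) =
        ∫ s in Ioo (-l) l, F (planeCoordinates b (t, s)) := by
      rw [intervalIntegral.integral_of_le (by linarith), integral_Ioc_eq_integral_Ioo]
      refine setIntegral_congr_ae measurableSet_Ioo ?_
      filter_upwards [ht] with s hs hsI
      obtain ⟨d1, d2⟩ := hs ((planeCoordinates_mem_ball b hr t s).2 hsI)
      have e1 := (hasDerivAt_planeCoordinates b t s d1).deriv
      have e2 := (hasDerivAt_planeCoordinates b t s d2).deriv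
      simp only [hF, Function.comp_def, e1, e2]
    rw [← hle]
    refine le_trans ?_ hone
    have h1 := hη _ (hend (-l) (by ring))
    have h2 := hη _ (hend l rfl)
    simp only [Function.comp_apply]
    linarith
  · have hl0 : l = 0 := by
      rw [hl, Real.sqrt_eq_zero']
      by_contra hcon
      exact htr (abs_lt.1 (abs_lt_of_sq_lt_sq (by linarith) hr.le))
    rw [indicator_of_notMem htr, hl0]
    simp

/-- Two ordered functions, the smaller being concave, on a disc: the total variation is monotone,
up to the discrepancy on the circle. -/
lemma exists_integral_norm_gradient_sub_ge :
    ∃ C : ℝ, ∀ {f g : EuclideanSpace ℝ (Fin 2) → ℝ} {r η : ℝ} {K L : NNReal}, 0 < r →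
      LipschitzOnWith K f (Metric.closedBall 0 r) →
      LipschitzOnWith L g (Metric.closedBall 0 r) →
      ConcaveOn ℝ (Metric.closedBall 0 r) f →
      (∀ x ∈ Metric.closedBall 0 r, f x ≤ g x) →
      (∀ x, ‖x‖ = r → g x - f x ≤ η) →
      -(C * (η * r)) ≤ ∫ x in Metric.ball 0 r, (‖gradient g x‖ - ‖gradient f x‖) := by
  obtain ⟨c, hc, hcp⟩ := exists_integral_abs_inner_eq
  refine ⟨8 * Real.pi / c, ?_⟩
  intro f g r η K L hr hf hg hfc hfg hη
  set e : ℝ → EuclideanSpace ℝ (Fin 2) := fun t => !₂[Real.cos t, Real.sin t] with he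
  have hec : Continuous e := by
    simp only [he]
    fun_prop
  have he1 (t : ℝ) : ‖e t‖ = 1 := by
    simp [he, EuclideanSpace.norm_eq]
  set F : EuclideanSpace ℝ (Fin 2) → ℝ → ℝ := fun x t =>
    |inner ℝ (gradient g x) (e t)| - |inner ℝ (gradient f x) (e t)| with hF
  have hint (p : EuclideanSpace ℝ (Fin 2)) :
      IntervalIntegrable (fun t => |inner ℝ p (e t)|) volume 0 (2 * Real.pi) :=
    Continuous.intervalIntegrable (by fun_prop) _ _
  have hinner (x : EuclideanSpace ℝ (Fin 2)) :
      ∫ t in Ioc 0 (2 * Real.pi), F x t = c * (‖gradient g x‖ - ‖gradient f x‖) := by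
    rw [← intervalIntegral.integral_of_le (by positivity),
      intervalIntegral.integral_sub (hint _) (hint _), hcp, hcp]
    ring
  have hFm : Measurable (Function.uncurry F) :=
    ((((measurable_gradient g).comp measurable_fst).inner
        (hec.measurable.comp measurable_snd)).abs).sub
      ((((measurable_gradient f).comp measurable_fst).inner
        (hec.measurable.comp measurable_snd)).abs)
  have hFb : ∀ x ∈ Metric.ball (0 : EuclideanSpace ℝ (Fin 2)) r, ∀ t, ‖F x t‖ ≤ L + K := by
    intro x hx t
    have hs : Metric.closedBall (0 : EuclideanSpace ℝ (Fin 2)) r ∈ nhds x :=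
      Filter.mem_of_superset (Metric.isOpen_ball.mem_nhds hx) Metric.ball_subset_closedBall
    have h1 := norm_gradient_le_of_lipschitzOn hs hf
    have h2 := norm_gradient_le_of_lipschitzOn hs hg
    have h3 := abs_real_inner_le_norm (gradient g x) (e t)
    have h4 := abs_real_inner_le_norm (gradient f x) (e t)
    rw [he1, mul_one] at h3 h4
    rw [Real.norm_eq_abs, abs_le]
    constructor <;> simp only [hF] <;>
      linarith [abs_nonneg (inner ℝ (gradient g x) (e t)),
        abs_nonneg (inner ℝ (gradient f x) (e t))]
  have hFi : Integrable (Function.uncurry F)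
      ((volume.restrict (Metric.ball (0 : EuclideanSpace ℝ (Fin 2)) r)).prod
        (volume.restrict (Ioc 0 (2 * Real.pi)))) := by
    rw [Measure.prod_restrict]
    refine IntegrableOn.of_bound ?_ hFm.aestronglyMeasurable.restrict (L + K)
      ((ae_restrict_iff' (measurableSet_ball.prod measurableSet_Ioc)).2
        (.of_forall fun z hz => hFb _ hz.1 _))
    rw [Measure.prod_prod]
    exact ENNReal.mul_lt_top measure_ball_lt_top measure_Ioc_lt_top
  have hswap := integral_integral_swap hFi
  simp_rw [hinner] at hswap
  rw [integral_const_mul] at hswap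
  have hlow : ∫ t in Ioc 0 (2 * Real.pi), -(4 * η * r) ≤
      ∫ t in Ioc 0 (2 * Real.pi), ∫ x in Metric.ball 0 r, F x t :=
    integral_mono (integrable_const _) hFi.integral_prod_right
      fun t => integral_abs_inner_gradient_sub_ge hr hf hg hfc hfg hη (he1 t)
  rw [← hswap, setIntegral_const, measureReal_def, Real.volume_Ioc,
    ENNReal.toReal_ofReal (by linarith [Real.pi_pos]), smul_eq_mul, ← div_le_iff₀' hc] at hlow
  refine le_trans (le_of_eq ?_) hlow
  field_simp
  ring

lemma isOpen_Omega : IsOpen Omega := Metric.isOpen_ball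

lemma mem_Omega {x : EuclideanSpace ℝ (Fin 2)} : x ∈ Omega ↔ ‖x‖ < 1 := mem_ball_zero_iff

/-- The tangent plane of a concave function lies above it. -/
lemma ConcaveOn.le_add_inner_gradient {s : Set (EuclideanSpace ℝ (Fin 2))}
    {u : EuclideanSpace ℝ (Fin 2) → ℝ} (hu : ConcaveOn ℝ s u) {x y : EuclideanSpace ℝ (Fin 2)}
    (hx : x ∈ s) (hy : y ∈ s) (hd : DifferentiableAt ℝ u x) :
    u y ≤ u x + inner ℝ (gradient u x) (y - x) := by
  have hc : ConcaveOn ℝ (AffineMap.lineMap (k := ℝ) x y ⁻¹' s)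
      (u ∘ AffineMap.lineMap (k := ℝ) x y) := hu.comp_affineMap _
  have hd' : HasDerivAt (u ∘ AffineMap.lineMap (k := ℝ) x y)
      (inner ℝ (gradient u x) (y - x)) 0 := by
    rw [inner_gradient_left]
    refine HasFDerivAt.comp_hasDerivAt (0 : ℝ) ?_ AffineMap.hasDerivAt_lineMap
    simpa using hd.hasFDerivAt
  have h := hc.slope_le_of_hasDerivAt (x := 0) (y := 1) (by simpa using hx) (by simpa using hy)
    one_pos hd'
  simp only [slope_def_field, Function.comp_apply, AffineMap.lineMap_apply_zero,
    AffineMap.lineMap_apply_one, sub_zero, div_one] at h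
  linarith

lemma hasGradientAt_affine (p : EuclideanSpace ℝ (Fin 2)) (c : ℝ)
    (x : EuclideanSpace ℝ (Fin 2)) : HasGradientAt (fun y => c + inner ℝ p y) p x := by
  rw [hasGradientAt_iff_hasFDerivAt]
  exact ((InnerProductSpace.toDual ℝ (EuclideanSpace ℝ (Fin 2)) p).hasFDerivAt).const_add c

/-- Two differentiable functions in contact have the same gradient. -/
lemma gradient_eq_of_le_of_eq {s : Set (EuclideanSpace ℝ (Fin 2))} (hs : IsOpen s)
    {f g : EuclideanSpace ℝ (Fin 2) → ℝ} {x : EuclideanSpace ℝ (Fin 2)} (hx : x ∈ s)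
    (hf : DifferentiableAt ℝ f x) (hg : DifferentiableAt ℝ g x) (hfg : ∀ y ∈ s, f y ≤ g y)
    (heq : f x = g x) : gradient f x = gradient g x := by
  have hmin : IsLocalMin (g - f) x := by
    filter_upwards [hs.mem_nhds hx] with y hy
    simp only [Pi.sub_apply, heq, sub_self]
    exact sub_nonneg.2 (hfg y hy)
  have h := hmin.fderiv_eq_zero
  rw [fderiv_sub hg hf, sub_eq_zero] at h
  rw [gradient, gradient, h]

/-- The affine functions `y ↦ c + ⟪p, y⟫` above `u` whose slope is zero or at least one. -/
def steepMajorants (u : EuclideanSpace ℝ (Fin 2) → ℝ) : Set (EuclideanSpace ℝ (Fin 2) × ℝ) :=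
  {q | (q.1 = 0 ∨ 1 ≤ ‖q.1‖) ∧ ∀ y ∈ Omega, u y ≤ q.2 + inner ℝ q.1 y}

/-- The infimum of the affine majorants of `u` of slope zero or at least one. -/
noncomputable def steepHull (u : EuclideanSpace ℝ (Fin 2) → ℝ) (x : EuclideanSpace ℝ (Fin 2)) :
    ℝ :=
  sInf ((fun q : EuclideanSpace ℝ (Fin 2) × ℝ => q.2 + inner ℝ q.1 x) '' steepMajorants u)

lemma isClosed_steepMajorants (u : EuclideanSpace ℝ (Fin 2) → ℝ) :
    IsClosed (steepMajorants u) := by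
  have : steepMajorants u = ({q | q.1 = 0} ∪ {q | 1 ≤ ‖q.1‖}) ∩
      ⋂ y ∈ Omega, {q | u y ≤ q.2 + inner ℝ q.1 y} := by
    ext q
    simp [steepMajorants]
  rw [this]
  refine ((isClosed_eq continuous_fst continuous_const).union
    (isClosed_le continuous_const continuous_fst.norm)).inter
    (isClosed_biInter fun y _ => isClosed_le continuous_const (by fun_prop))

section SteepHull

variable {u : EuclideanSpace ℝ (Fin 2) → ℝ} {M : ℝ}

lemma const_mem_steepMajorants (huM : ∀ x ∈ Omega, u x ∈ Icc 0 M) :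
    ((0 : EuclideanSpace ℝ (Fin 2)), M) ∈ steepMajorants u :=
  ⟨Or.inl rfl, fun y hy => by simpa using (huM y hy).2⟩

lemma steepMajorants_bounded (huM : ∀ x ∈ Omega, u x ∈ Icc 0 M) {x : EuclideanSpace ℝ (Fin 2)}
    (hx : x ∈ Omega) :
    Bornology.IsBounded (steepMajorants u ∩ {q | q.2 + inner ℝ q.1 x ≤ M}) := by
  rw [mem_Omega] at hx
  have hM : 0 ≤ M := (huM 0 (by simp [mem_Omega])).1.trans (huM 0 (by simp [mem_Omega])).2
  set ρ := (1 - ‖x‖) / 2 with hρ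
  have hρ0 : 0 < ρ := by linarith
  refine (Metric.isBounded_closedBall (x := 0) (r := M / ρ + M)).subset ?_
  rintro ⟨p, c⟩ ⟨⟨-, hq⟩, hqM⟩
  simp only [mem_ofPred_eq] at hq hqM
  have hnon {y : EuclideanSpace ℝ (Fin 2)} (hy : y ∈ Omega) : 0 ≤ c + inner ℝ p y :=
    (huM y hy).1.trans (hq y hy)
  have hc : 0 ≤ c := by simpa using hnon (y := 0) (by simp [mem_Omega])
  have hp : ‖p‖ ≤ M / ρ := by
    rcases eq_or_ne p 0 with rfl | hp0
    · simpa using div_nonneg hM hρ0.le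
    have hpn : 0 < ‖p‖ := norm_pos_iff.2 hp0
    have hy : x - (ρ / ‖p‖) • p ∈ Omega := by
      rw [mem_Omega]
      refine (norm_sub_le _ _).trans_lt ?_
      rw [norm_smul, norm_div, norm_norm, div_mul_cancel₀ _ hpn.ne', Real.norm_of_nonneg hρ0.le]
      linarith
    have h := hnon hy
    rw [inner_sub_right, inner_smul_right, real_inner_self_eq_norm_sq,
      show ρ / ‖p‖ * ‖p‖ ^ 2 = ρ * ‖p‖ by field_simp] at h
    rw [le_div_iff₀ hρ0]
    linarith
  have hc' : c ≤ M / ρ + M := by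
    have h1 := abs_le.1 (abs_real_inner_le_norm p x)
    nlinarith [norm_nonneg p, norm_nonneg x]
  rw [mem_closedBall_zero_iff, Prod.norm_def, max_le_iff, Real.norm_of_nonneg hc]
  exact ⟨by linarith, hc'⟩

/-- The infimum defining the steep hull is attained. -/
lemma exists_steepHull_eq (huM : ∀ x ∈ Omega, u x ∈ Icc 0 M) {x : EuclideanSpace ℝ (Fin 2)}
    (hx : x ∈ Omega) :
    ∃ q ∈ steepMajorants u, steepHull u x = q.2 + inner ℝ q.1 x := by
  have hcont : Continuous fun q : EuclideanSpace ℝ (Fin 2) × ℝ => q.2 + inner ℝ q.1 x := by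
    fun_prop
  have hcomp : IsCompact (steepMajorants u ∩ {q | q.2 + inner ℝ q.1 x ≤ M}) :=
    Metric.isCompact_of_isClosed_isBounded
      ((isClosed_steepMajorants u).inter (isClosed_le hcont continuous_const))
      (steepMajorants_bounded huM hx)
  obtain ⟨q, hq, hmin⟩ := hcomp.exists_isMinOn
    ⟨(0, M), const_mem_steepMajorants huM, by simp⟩ hcont.continuousOn
  refine ⟨q, hq.1, IsLeast.csInf_eq ⟨mem_image_of_mem _ hq.1, ?_⟩⟩
  rintro _ ⟨q', hq', rfl⟩
  rcases le_total (q'.2 + inner ℝ q'.1 x) M with h | h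
  · exact hmin ⟨hq', h⟩
  · exact le_trans hq.2 h

lemma steepHull_le {x : EuclideanSpace ℝ (Fin 2)} (hx : x ∈ Omega)
    {q : EuclideanSpace ℝ (Fin 2) × ℝ} (hq : q ∈ steepMajorants u) :
    steepHull u x ≤ q.2 + inner ℝ q.1 x := by
  refine csInf_le ⟨u x, ?_⟩ (mem_image_of_mem _ hq)
  rintro _ ⟨q', hq', rfl⟩
  exact hq'.2 x hx

lemma le_steepHull (huM : ∀ x ∈ Omega, u x ∈ Icc 0 M) {x : EuclideanSpace ℝ (Fin 2)}
    (hx : x ∈ Omega) : u x ≤ steepHull u x := by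
  obtain ⟨q, hq, h⟩ := exists_steepHull_eq huM hx
  exact h ▸ hq.2 x hx

lemma steepHull_mem_Icc (huM : ∀ x ∈ Omega, u x ∈ Icc 0 M) {x : EuclideanSpace ℝ (Fin 2)}
    (hx : x ∈ Omega) : steepHull u x ∈ Icc 0 M :=
  ⟨(huM x hx).1.trans (le_steepHull huM hx),
    by simpa using steepHull_le hx (const_mem_steepMajorants huM)⟩

lemma concaveOn_steepHull (huM : ∀ x ∈ Omega, u x ∈ Icc 0 M) :
    ConcaveOn ℝ Omega (steepHull u) := by
  have hconv : Convex ℝ Omega := convex_ball _ _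
  refine ⟨hconv, fun x hx y hy a b ha hb hab => ?_⟩
  obtain ⟨q, hq, h⟩ := exists_steepHull_eq huM (hconv hx hy ha hb hab)
  rw [h, inner_add_right, inner_smul_right, inner_smul_right]
  have h1 := mul_le_mul_of_nonneg_left (steepHull_le hx hq) ha
  have h2 := mul_le_mul_of_nonneg_left (steepHull_le hy hq) hb
  obtain rfl : b = 1 - a := by linarith
  simp only [smul_eq_mul]
  linarith

lemma ConcaveOn.exists_lipschitzOnWith_closedBall (hu : ConcaveOn ℝ Omega u)
    (huM : ∀ x ∈ Omega, u x ∈ Icc 0 M) {r : ℝ} (hr : r < 1) :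
    ∃ K, LipschitzOnWith K u (Metric.closedBall 0 r) := by
  obtain ⟨K, hK⟩ := ConcaveOn.exists_lipschitzOnWith_of_isBounded (r' := (r + 1) / 2) hu
    (by linarith) ((Metric.isBounded_Icc 0 M).subset (image_subset_iff.2 huM))
  exact ⟨K, hK.mono (Metric.closedBall_subset_ball (by linarith))⟩

lemma ConcaveOn.ae_differentiableAt (hu : ConcaveOn ℝ Omega u)
    (huM : ∀ x ∈ Omega, u x ∈ Icc 0 M) :
    ∀ᵐ x : EuclideanSpace ℝ (Fin 2), x ∈ Omega → DifferentiableAt ℝ u x := by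
  have h (n : ℕ) : ∀ᵐ x : EuclideanSpace ℝ (Fin 2), x ∈ Metric.ball 0 (1 - 1 / ((n : ℝ) + 1)) →
      DifferentiableAt ℝ u x := by
    obtain ⟨K, hK⟩ := hu.exists_lipschitzOnWith_closedBall huM
      (r := 1 - 1 / ((n : ℝ) + 1)) (sub_lt_self _ (by positivity))
    filter_upwards [(hK.mono Metric.ball_subset_closedBall).ae_differentiableWithinAt_of_mem]
      with x h1 hx
    exact (h1 hx).differentiableAt (Metric.isOpen_ball.mem_nhds hx)
  filter_upwards [ae_all_iff.2 h] with x hx hxO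
  rw [mem_Omega] at hxO
  obtain ⟨n, hn⟩ := exists_nat_one_div_lt (sub_pos.2 hxO)
  exact hx n (by rw [mem_ball_zero_iff]; linarith)

/-- A concave function on the disc lies below the affine function `y ↦ c + ⟪p, y⟫` tangent to it. -/
lemma ConcaveOn.le_tangent (hu : ConcaveOn ℝ Omega u) {x y : EuclideanSpace ℝ (Fin 2)}
    (hx : x ∈ Omega) (hd : DifferentiableAt ℝ u x) (hy : y ∈ Omega) :
    u y ≤ (u x - inner ℝ (gradient u x) x) + inner ℝ (gradient u x) y := by
  have := hu.le_add_inner_gradient hx hy hd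
  rw [inner_sub_right] at this
  linarith

lemma lt_steepHull (huM : ∀ x ∈ Omega, u x ∈ Icc 0 M) {x : EuclideanSpace ℝ (Fin 2)}
    (hx : x ∈ Omega) (hd : DifferentiableAt ℝ u x) (hg : ‖gradient u x‖ ∈ Ioo (0 : ℝ) 1) :
    u x < steepHull u x := by
  refine lt_of_le_of_ne (le_steepHull huM hx) fun heq => ?_
  obtain ⟨q, hq, h⟩ := exists_steepHull_eq huM hx
  have hqd := hasGradientAt_affine q.1 q.2 x
  have := gradient_eq_of_le_of_eq isOpen_Omega hx hd hqd.differentiableAt hq.2 (heq.trans h)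
  rw [hqd.gradient] at this
  rw [this] at hg
  rcases hq.1 with h0 | h1
  · simp [h0] at hg
  · exact absurd hg.2 (not_lt.2 h1)

lemma norm_gradient_mem_Ioo_of_lt_steepHull (hu : ConcaveOn ℝ Omega u)
    {x : EuclideanSpace ℝ (Fin 2)} (hx : x ∈ Omega) (hd : DifferentiableAt ℝ u x)
    (hlt : u x < steepHull u x) : ‖gradient u x‖ ∈ Ioo (0 : ℝ) 1 := by
  by_contra hcon
  have hq : (gradient u x, u x - inner ℝ (gradient u x) x) ∈ steepMajorants u := by
    refine ⟨?_, fun y hy => hu.le_tangent hx hd hy⟩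
    rw [mem_Ioo, not_and_or, not_lt, not_lt] at hcon
    simpa using hcon
  have := steepHull_le hx hq
  simp at this
  linarith

lemma norm_gradient_steepHull (hu : ConcaveOn ℝ Omega u) (huM : ∀ x ∈ Omega, u x ∈ Icc 0 M)
    {x : EuclideanSpace ℝ (Fin 2)} (hx : x ∈ Omega) (hd : DifferentiableAt ℝ u x)
    (hd' : DifferentiableAt ℝ (steepHull u) x) (hlt : u x < steepHull u x) :
    ‖gradient (steepHull u) x‖ = 0 ∨ ‖gradient (steepHull u) x‖ = 1 := by
  obtain ⟨⟨p, c⟩, hq, h⟩ := exists_steepHull_eq huM hx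
  have hqd := hasGradientAt_affine p c x
  have hgrad := gradient_eq_of_le_of_eq isOpen_Omega hx hd' hqd.differentiableAt
    (fun y hy => steepHull_le hy hq) h
  rw [hqd.gradient] at hgrad
  rw [hgrad]
  rcases hq.1 with h0 | h1
  · left
    simpa using h0
  right
  refine le_antisymm ?_ h1
  by_contra! hp
  have hgu := norm_gradient_mem_Ioo_of_lt_steepHull hu hx hd hlt
  set g := gradient u x with hg
  set s := (‖p‖ - 1) / (‖p‖ + 1) with hs
  have hs0 : 0 < s := div_pos (by linarith) (by linarith)
  have hs1 : s ≤ 1 := (div_le_one (by linarith)).2 (by linarith)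
  have hs2 : s * (‖p‖ + 1) = ‖p‖ - 1 := div_mul_cancel₀ _ (by linarith)
  have hmem : ((1 - s) • p + s • g, (1 - s) * c + s * (u x - inner ℝ g x)) ∈
      steepMajorants u := by
    refine ⟨Or.inr ?_, fun y hy => ?_⟩
    · have h2 := norm_sub_le_norm_add ((1 - s) • p) (s • g)
      rw [norm_smul, norm_smul, Real.norm_of_nonneg hs0.le,
        Real.norm_of_nonneg (sub_nonneg.2 hs1)] at h2
      refine le_trans ?_ h2
      nlinarith [hgu.2]
    · have e1 := mul_le_mul_of_nonneg_left (hq.2 y hy) (sub_nonneg.2 hs1)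
      have e2 := mul_le_mul_of_nonneg_left (hu.le_tangent hx hd hy) hs0.le
      simp only [inner_add_left, real_inner_smul_left] at *
      linarith
  have hle := steepHull_le hx hmem
  simp only [inner_add_left, real_inner_smul_left] at h hle
  nlinarith

lemma steepHull_le_add (hu : ConcaveOn ℝ Omega u) (huM : ∀ x ∈ Omega, u x ∈ Icc 0 M)
    {x : EuclideanSpace ℝ (Fin 2)} (hx : x ∈ Omega) :
    steepHull u x ≤ u x + 2 * (1 - ‖x‖) := by
  have hdiffpt {x : EuclideanSpace ℝ (Fin 2)} (hx : x ∈ Omega) (hd : DifferentiableAt ℝ u x) :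
      steepHull u x ≤ u x + 2 * (1 - ‖x‖) := by
    have hx1 := mem_Omega.1 hx
    obtain ⟨z, hz, hzx⟩ : ∃ z : EuclideanSpace ℝ (Fin 2), ‖z‖ = 1 ∧ inner ℝ z x = ‖x‖ := by
      rcases eq_or_ne x 0 with rfl | hx0
      · obtain ⟨z, hz⟩ := exists_norm_eq (EuclideanSpace ℝ (Fin 2)) zero_le_one
        exact ⟨z, hz, by simp⟩
      · have hxn : ‖x‖ ≠ 0 := norm_ne_zero_iff.2 hx0
        refine ⟨‖x‖⁻¹ • x, by rw [norm_smul, norm_inv, norm_norm, inv_mul_cancel₀ hxn], ?_⟩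
        rw [real_inner_smul_left, real_inner_self_eq_norm_sq]
        field_simp
    rcases le_or_gt 1 ‖gradient u x‖ with h1 | h1
    · have hq : (gradient u x, u x - inner ℝ (gradient u x) x) ∈ steepMajorants u :=
        ⟨Or.inr h1, fun y hy => hu.le_tangent hx hd hy⟩
      have := steepHull_le hx hq
      linarith
    · have hq : (gradient u x - (2 : ℝ) • z, u x - inner ℝ (gradient u x) x + 2) ∈
          steepMajorants u := by
        refine ⟨Or.inr ?_, fun y hy => ?_⟩
        · have := norm_sub_norm_le ((2 : ℝ) • z) (gradient u x)
          rw [norm_smul, hz, norm_sub_rev] at this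
          norm_num at this
          linarith
        · have e1 := hu.le_tangent hx hd hy
          have e2 := real_inner_le_norm z y
          rw [hz, one_mul] at e2
          have e3 := mem_Omega.1 hy
          rw [inner_sub_left, real_inner_smul_left]
          linarith
      have := steepHull_le hx hq
      simp only [inner_sub_left, real_inner_smul_left, hzx] at this
      linarith
  by_contra! hcon
  have hopen : IsOpen (Omega ∩ {x | u x + 2 * (1 - ‖x‖) < steepHull u x}) := by
    have hcu := hu.continuousOn isOpen_Omega
    have hcv := (concaveOn_steepHull huM).continuousOn isOpen_Omega
    have hcw : ContinuousOn
        (fun x => steepHull u x - (u x + 2 * (1 - ‖x‖))) Omega := by fun_prop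
    convert hcw.isOpen_inter_preimage isOpen_Omega isOpen_Ioi (t := Ioi 0) using 1
    ext y
    simp
  have hpos := hopen.measure_pos volume ⟨x, hx, hcon⟩
  refine hpos.ne' (measure_mono_null ?_ (ae_iff.1 (hu.ae_differentiableAt huM)))
  rintro y ⟨hy, hlt⟩ hdy
  exact absurd (hdiffpt hy (hdy hy)) (not_le.2 hlt)

end SteepHull

lemma newton_integrand_eq (p : ℝ) :
    1 / (p ^ 2 + 1) + p / 2 = 1 + p * (1 - p) ^ 2 / (2 * (p ^ 2 + 1)) := by
  have : p ^ 2 + 1 ≠ 0 := by positivity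
  field_simp
  ring

lemma integrableOn_newton_integrand (f : EuclideanSpace ℝ (Fin 2) → ℝ) :
    IntegrableOn (fun x => 1 / (‖gradient f x‖ ^ 2 + 1)) Omega := by
  refine IntegrableOn.of_bound measure_ball_lt_top ?_ 1 (.of_forall fun x => ?_)
  · exact (measurable_const.div
      (((measurable_gradient f).norm.pow_const 2).add_const 1)).aestronglyMeasurable.restrict
  · rw [Real.norm_of_nonneg (by positivity), div_le_one (by positivity)]
    linarith [sq_nonneg ‖gradient f x‖]

/-- Replacing `u` by its steep hull strictly decreases the resistance, unless this changes
nothing. -/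
lemma J_steepHull_lt {u : EuclideanSpace ℝ (Fin 2) → ℝ} {M : ℝ} (hu : ConcaveOn ℝ Omega u)
    (huM : ∀ x ∈ Omega, u x ∈ Icc 0 M) {x₀ : EuclideanSpace ℝ (Fin 2)} (hx₀ : x₀ ∈ Omega)
    (hlt : u x₀ < steepHull u x₀) : J (steepHull u) < J u := by
  set v := steepHull u with hv
  have hvc : ConcaveOn ℝ Omega v := concaveOn_steepHull huM
  have hvM : ∀ x ∈ Omega, v x ∈ Icc 0 M := fun x hx => steepHull_mem_Icc huM hx
  set H : EuclideanSpace ℝ (Fin 2) → ℝ := fun x =>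
    1 / (‖gradient u x‖ ^ 2 + 1) - 1 / (‖gradient v x‖ ^ 2 + 1) with hH
  set N : EuclideanSpace ℝ (Fin 2) → ℝ := fun x => ‖gradient v x‖ - ‖gradient u x‖ with hN
  have hHi : IntegrableOn H Omega :=
    (integrableOn_newton_integrand u).sub (integrableOn_newton_integrand v)
  have hsub {r : ℝ} (hr : r < 1) : Metric.closedBall (0 : EuclideanSpace ℝ (Fin 2)) r ⊆ Omega :=
    Metric.closedBall_subset_ball hr
  have hNi {r : ℝ} (hr : r < 1) : IntegrableOn N (Metric.ball 0 r) := by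
    obtain ⟨K, hK⟩ := hu.exists_lipschitzOnWith_closedBall huM hr
    obtain ⟨L, hL⟩ := hvc.exists_lipschitzOnWith_closedBall hvM hr
    refine IntegrableOn.of_bound measure_ball_lt_top
      ((measurable_gradient v).norm.sub
        (measurable_gradient u).norm).aestronglyMeasurable.restrict (L + K)
      ((ae_restrict_iff' measurableSet_ball).2 (.of_forall fun x hx => ?_))
    have hs : Metric.closedBall (0 : EuclideanSpace ℝ (Fin 2)) r ∈ nhds x :=
      Filter.mem_of_superset (Metric.isOpen_ball.mem_nhds hx) Metric.ball_subset_closedBall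
    have h1 := norm_gradient_le_of_lipschitzOn hs hK
    have h2 := norm_gradient_le_of_lipschitzOn hs hL
    rw [Real.norm_eq_abs, abs_le]
    constructor <;> simp only [hN] <;> linarith [norm_nonneg (gradient u x),
      norm_nonneg (gradient v x)]
  have hae : ∀ᵐ x : EuclideanSpace ℝ (Fin 2), x ∈ Omega →
      0 ≤ H x - N x / 2 ∧ (u x < v x → 0 < H x - N x / 2) := by
    filter_upwards [hu.ae_differentiableAt huM, hvc.ae_differentiableAt hvM] with x h1 h2 hx
    have d1 := h1 hx
    have d2 := h2 hx
    rcases (le_steepHull huM hx).eq_or_lt with heq | hltx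
    · have := gradient_eq_of_le_of_eq isOpen_Omega hx d1 d2 (fun y hy => le_steepHull huM hy) heq
      refine ⟨by simp [hH, hN, this], fun h => absurd heq h.ne⟩
    · have hpos : 0 < H x - N x / 2 := by
        have hg := norm_gradient_mem_Ioo_of_lt_steepHull hu hx d1 hltx
        have e1 := newton_integrand_eq ‖gradient u x‖
        have e2 : 1 / (‖gradient v x‖ ^ 2 + 1) + ‖gradient v x‖ / 2 = 1 := by
          rcases norm_gradient_steepHull hu huM hx d1 d2 hltx with h0 | h0 <;>
            rw [hv, h0] <;> norm_num
        have e3 : 0 < ‖gradient u x‖ * (1 - ‖gradient u x‖) ^ 2 /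
            (2 * (‖gradient u x‖ ^ 2 + 1)) :=
          div_pos (mul_pos hg.1 (pow_pos (sub_pos.2 hg.2) 2)) (by positivity)
        simp only [hH, hN]
        linarith
      exact ⟨hpos.le, fun _ => hpos⟩
  have hx1 := mem_Omega.1 hx₀
  set r₀ := (‖x₀‖ + 1) / 2 with hr₀
  have hr₀0 : 0 < r₀ := by linarith [norm_nonneg x₀]
  have hr₀1 : r₀ < 1 := by linarith
  have hGi {r : ℝ} (hr : r < 1) : IntegrableOn (fun x => H x - N x / 2) (Metric.ball 0 r) :=
    (hHi.mono_set (Metric.ball_subset_closedBall.trans (hsub hr))).sub ((hNi hr).div_const 2)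
  have hG0 {r : ℝ} (hr : r < 1) :
      0 ≤ᵐ[volume.restrict (Metric.ball 0 r)] fun x => H x - N x / 2 := by
    rw [Filter.EventuallyLE, ae_restrict_iff' measurableSet_ball]
    filter_upwards [hae] with x hx hxr
    exact (hx (hsub hr (Metric.ball_subset_closedBall hxr))).1
  have hδ : 0 < ∫ x in Metric.ball 0 r₀, (H x - N x / 2) := by
    rw [setIntegral_pos_iff_support_of_nonneg_ae (hG0 hr₀1) (hGi hr₀1)]
    have hopen : IsOpen (Omega ∩ {x | u x < v x}) := by
      have hcu := hu.continuousOn isOpen_Omega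
      have hcv := hvc.continuousOn isOpen_Omega
      have heq : Omega ∩ {x | u x < v x} = Omega ∩ (fun x => v x - u x) ⁻¹' Ioi 0 := by
        ext y
        simp
      rw [heq]
      exact (hcv.sub hcu).isOpen_inter_preimage isOpen_Omega isOpen_Ioi
    have hpos := (hopen.inter Metric.isOpen_ball).measure_pos volume
      ⟨x₀, ⟨hx₀, hlt⟩, show x₀ ∈ Metric.ball 0 r₀ by rw [mem_ball_zero_iff]; linarith⟩
    refine hpos.trans_le (measure_mono_ae ?_)
    filter_upwards [hae] with x hx hxm
    exact ⟨((hx hxm.1.1).2 hxm.1.2).ne', hxm.2⟩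
  set δ := ∫ x in Metric.ball 0 r₀, (H x - N x / 2) with hδdef
  obtain ⟨C, hC⟩ := exists_integral_norm_gradient_sub_ge
  have hbound {r : ℝ} (h0 : r₀ ≤ r) (h1 : r < 1) :
      δ ≤ (∫ x in Metric.ball 0 r, H x) + C * ((2 * (1 - r)) * r) / 2 := by
    have s1 : δ ≤ ∫ x in Metric.ball 0 r, (H x - N x / 2) :=
      setIntegral_mono_set (hGi h1) (hG0 h1) (Metric.ball_subset_ball h0).eventuallyLE
    rw [integral_sub (hHi.mono_set (Metric.ball_subset_closedBall.trans (hsub h1)))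
      ((hNi h1).div_const 2), integral_div] at s1
    obtain ⟨K, hK⟩ := hu.exists_lipschitzOnWith_closedBall huM h1
    obtain ⟨L, hL⟩ := hvc.exists_lipschitzOnWith_closedBall hvM h1
    have s2 := hC (η := 2 * (1 - r)) (by linarith) hK hL
      (hu.subset (hsub h1) (convex_closedBall _ _))
      (fun x hx => le_steepHull huM (hsub h1 hx)) (fun x hx => by
        have := steepHull_le_add hu huM (mem_Omega.2 (hx.trans_lt h1))
        rw [hx] at this
        linarith)
    linarith
  set ρ : ℕ → ℝ := fun n => 1 - (1 - r₀) * (1 / ((n : ℝ) + 1)) with hρ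
  have hρlim : Filter.Tendsto ρ Filter.atTop (nhds 1) := by
    simpa [hρ] using (tendsto_one_div_add_atTop_nhds_zero_nat.const_mul (1 - r₀)).const_sub 1
  have hρ1 (n : ℕ) : ρ n < 1 := sub_lt_self _ (mul_pos (by linarith) (by positivity))
  have hρmono : Monotone ρ := fun m n hmn => by
    have := mul_le_mul_of_nonneg_left (Nat.one_div_le_one_div (α := ℝ) hmn)
      (sub_nonneg.2 hr₀1.le)
    simp only [hρ]
    linarith
  have hρ0 (n : ℕ) : r₀ ≤ ρ n := by simpa [hρ] using hρmono (Nat.zero_le n)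
  have hunion : ⋃ n, Metric.ball (0 : EuclideanSpace ℝ (Fin 2)) (ρ n) = Omega := by
    refine subset_antisymm (iUnion_subset fun n => Metric.ball_subset_ball (hρ1 n).le) ?_
    intro x hx
    obtain ⟨n, hn⟩ := (hρlim.eventually_const_lt (mem_Omega.1 hx)).exists
    exact mem_iUnion.2 ⟨n, mem_ball_zero_iff.2 hn⟩
  have hlim : Filter.Tendsto (fun n => ∫ x in Metric.ball 0 (ρ n), H x) Filter.atTop
      (nhds (∫ x in Omega, H x)) := by
    have := tendsto_setIntegral_of_monotone (μ := volume) (f := H)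
      (s := fun n => Metric.ball 0 (ρ n)) (fun n => measurableSet_ball)
      (fun m n hmn => Metric.ball_subset_ball (hρmono hmn)) (by rwa [hunion])
    rwa [hunion] at this
  have hlim2 := hlim.add ((((hρlim.const_sub 1).const_mul 2).mul hρlim).const_mul C
    |>.div_const 2)
  have hfin := ge_of_tendsto' hlim2 fun n => hbound (hρ0 n) (hρ1 n)
  have hJ : ∫ x in Omega, H x = J u - J v :=
    integral_sub (integrableOn_newton_integrand u) (integrableOn_newton_integrand v)
  rw [hJ] at hfin
  simp only [sub_self, mul_zero, zero_mul, zero_div, add_zero] at hfin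
  linarith

/-- A minimizer of Newton's problem has no gradient of intermediate slope:
at every point of differentiability, `|∇u(x)| ∉ (0, 1)`. -/
theorem minimizer_gradient_norm_not_intermediate (M : ℝ) (hM : 0 < M)
    (u : EuclideanSpace ℝ (Fin 2) → ℝ)
    (hu : ConcaveOn ℝ Omega u) (huM : ∀ x ∈ Omega, u x ∈ Icc 0 M)
    (hmin : ∀ v : EuclideanSpace ℝ (Fin 2) → ℝ,
      ConcaveOn ℝ Omega v → (∀ x ∈ Omega, v x ∈ Icc 0 M) → J u ≤ J v) :
    ∀ x ∈ Omega, DifferentiableAt ℝ u x → ‖gradient u x‖ ∉ Ioo (0 : ℝ) 1 := by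
  intro x hx hd hg
  exact absurd (hmin _ (concaveOn_steepHull huM) fun y hy => steepHull_mem_Icc huM hy)
    (not_le.2 (J_steepHull_lt hu huM hx (lt_steepHull huM hx hd hg)))
end

section
/- On any open set where a minimizer of Newton's problem is twice continuously differentiable, its Hessian is everywhere degenerate: if u : Ω → [0, M] is concave and minimizes J over all concave functions v : Ω → [0, M], and u is C² on an open subset ω ⊆ Ω, then for every x ∈ ω the Hessian matrix ∇²u(x) is singular, i.e., det ∇²u(x) = 0 (equivalently, there exists a nonzero vector v ∈ ℝ² with ∇²u(x) v = 0). -/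
open Set MeasureTheory

open scoped Topology RealInnerProductSpace

section Concavity

variable {E : Type*} [NormedAddCommGroup E] [NormedSpace ℝ E]

lemma ConcaveOn.add_sub_le {s : Set E} {f : E → ℝ} (hf : ConcaveOn ℝ s f) {x d : E}
    (h₁ : x + d ∈ s) (h₂ : x - d ∈ s) : f (x + d) + f (x - d) ≤ 2 * f x := by
  have h := hf.2 h₁ h₂ (show (0 : ℝ) ≤ 1 / 2 by norm_num)
    (show (0 : ℝ) ≤ 1 / 2 by norm_num) (by norm_num)
  have e : (1 / 2 : ℝ) • (x + d) + (1 / 2 : ℝ) • (x - d) = x := by module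
  rw [e] at h
  simp only [smul_eq_mul] at h
  linarith

/-- A continuous function that is midpoint concave near each point of a convex set is concave. -/
lemma concaveOn_of_local_midpoint {s : Set E} {f : E → ℝ} (hs : Convex ℝ s)
    (hf : ContinuousOn f s)
    (h : ∀ x ∈ s, ∃ r > 0, ∀ d : E, ‖d‖ < r → f (x + d) + f (x - d) ≤ 2 * f x) :
    ConcaveOn ℝ s f := by
  refine ⟨hs, fun x hx y hy a b ha hb hab => ?_⟩
  by_contra! hlt
  set g : ℝ → ℝ := fun τ => f (x + τ • (y - x)) - f x - τ * (f y - f x) with hg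
  have hmem : ∀ τ ∈ Icc (0 : ℝ) 1, x + τ • (y - x) ∈ s := fun τ hτ => by
    have := hs hx hy (a := 1 - τ) (b := τ) (by linarith [hτ.2]) hτ.1 (by ring)
    convert this using 1
    module
  have hgc : ContinuousOn g (Icc 0 1) := by
    have : ContinuousOn (fun τ : ℝ => f (x + τ • (y - x))) (Icc 0 1) :=
      hf.comp (by fun_prop) hmem
    exact (this.sub continuousOn_const).sub (by fun_prop)
  obtain ⟨τ₀, hτ₀, hmin⟩ := isCompact_Icc.exists_isMinOn (nonempty_Icc.2 zero_le_one) hgc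
  have hneg : g τ₀ < 0 := by
    refine (hmin (show b ∈ Icc (0 : ℝ) 1 from ⟨hb, by linarith⟩)).trans_lt ?_
    have e : x + b • (y - x) = a • x + b • y := by
      rw [show a = 1 - b by linarith]; module
    simp only [hg, e]
    rw [show a = 1 - b by linarith] at hlt ⊢
    simp only [smul_eq_mul] at hlt
    linarith
  have hcomp : IsCompact (Icc (0 : ℝ) 1 ∩ g ⁻¹' {g τ₀}) :=
    isCompact_Icc.of_isClosed_subset (hgc.preimage_isClosed_of_isClosed isClosed_Icc
      isClosed_singleton) inter_subset_left
  obtain ⟨c, ⟨hc, hcm⟩, hgr⟩ := hcomp.exists_isGreatest ⟨τ₀, hτ₀, rfl⟩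
  have hcm : g c = g τ₀ := hcm
  have hc0 : 0 < c := lt_of_le_of_ne hc.1 fun h0 => by
    rw [← hcm, ← h0] at hneg; simp [hg] at hneg
  have hc1 : c < 1 := lt_of_le_of_ne hc.2 fun h0 => by
    rw [← hcm, h0] at hneg; simp [hg] at hneg
  obtain ⟨r, hr, hloc⟩ := h _ (hmem c hc)
  obtain ⟨ε, hε, hε0, hε1, hεr⟩ :
      ∃ ε > 0, ε < c ∧ ε < 1 - c ∧ ‖ε • (y - x)‖ < r := by
    have hev : ∀ᶠ ε in 𝓝[>] (0 : ℝ), ‖ε • (y - x)‖ < r := by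
      have : Filter.Tendsto (fun ε : ℝ => ‖ε • (y - x)‖) (𝓝 0) (𝓝 ‖(0 : ℝ) • (y - x)‖) :=
        Continuous.tendsto (by fun_prop) 0
      exact nhdsWithin_le_nhds (this.eventually_lt_const (by simpa using hr))
    have h1 : ∀ᶠ ε in 𝓝[>] (0 : ℝ), ε < c := nhdsWithin_le_nhds (eventually_lt_nhds hc0)
    have h2 : ∀ᶠ ε in 𝓝[>] (0 : ℝ), ε < 1 - c :=
      nhdsWithin_le_nhds (eventually_lt_nhds (by linarith))
    obtain ⟨ε, h1, h2, h3, h4⟩ :=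
      (h1.and (h2.and (hev.and self_mem_nhdsWithin))).exists
    exact ⟨ε, h4, h1, h2, h3⟩
  have hmid := hloc _ hεr
  have e1 : x + c • (y - x) + ε • (y - x) = x + (c + ε) • (y - x) := by module
  have e2 : x + c • (y - x) - ε • (y - x) = x + (c - ε) • (y - x) := by module
  rw [e1, e2] at hmid
  have hg2 : g (c + ε) + g (c - ε) ≤ 2 * g c := by simp only [hg]; linarith
  have hp : c + ε ∈ Icc (0 : ℝ) 1 := ⟨by linarith, by linarith⟩
  have hplus : g τ₀ ≤ g (c + ε) := hmin hp
  have hminus : g τ₀ ≤ g (c - ε) := hmin (show c - ε ∈ Icc (0 : ℝ) 1 from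
    ⟨by linarith, by linarith⟩)
  have : c + ε ≤ c := hgr ⟨hp, show g (c + ε) = g τ₀ by linarith⟩
  linarith

/-- An upper bound on the second derivative bounds the symmetric second difference. -/
lemma add_sub_le_of_fderiv_fderiv_le {s : Set E} {f : E → ℝ} (hs : IsOpen s)
    (hconv : Convex ℝ s) (hf : ContDiffOn ℝ 2 f s) {x d : E} {C : ℝ} (h₁ : x + d ∈ s)
    (h₂ : x - d ∈ s) (hC : ∀ z ∈ s, fderiv ℝ (fderiv ℝ f) z d d ≤ C) :
    f (x + d) + f (x - d) ≤ 2 * f x + C := by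
  have hmem : ∀ τ ∈ Icc (-1 : ℝ) 1, x + τ • d ∈ s := fun τ hτ => by
    have := hconv h₁ h₂ (a := (1 + τ) / 2) (b := (1 - τ) / 2) (by linarith [hτ.1])
      (by linarith [hτ.2]) (by ring)
    convert this using 1
    module
  have hline : ∀ τ : ℝ, HasDerivAt (fun τ : ℝ => x + τ • d) d τ := fun τ => by
    simpa using ((hasDerivAt_id τ).smul_const d).const_add x
  have hd1 : ∀ τ ∈ Icc (-1 : ℝ) 1, HasDerivAt (fun τ : ℝ => f (x + τ • d) - C * τ ^ 2 / 2)
      (fderiv ℝ f (x + τ • d) d - C * τ) τ := fun τ hτ => by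
    have hfd : DifferentiableAt ℝ f (x + τ • d) :=
      (hf.contDiffAt (hs.mem_nhds (hmem τ hτ))).differentiableAt (by norm_num)
    have h1 : HasDerivAt (fun τ : ℝ => f (x + τ • d)) (fderiv ℝ f (x + τ • d) d) τ :=
      hfd.hasFDerivAt.comp_hasDerivAt τ (hline τ)
    have h2 : HasDerivAt (fun τ : ℝ => C * τ ^ 2 / 2) (C * τ) τ :=
      (((hasDerivAt_pow 2 τ).const_mul C).div_const 2).congr_deriv (by push_cast; ring)
    exact h1.sub h2
  have hd2 : ∀ τ ∈ Icc (-1 : ℝ) 1, HasDerivAt (fun τ : ℝ => fderiv ℝ f (x + τ • d) d - C * τ)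
      (fderiv ℝ (fderiv ℝ f) (x + τ • d) d d - C) τ := fun τ hτ => by
    have hfd : DifferentiableAt ℝ (fderiv ℝ f) (x + τ • d) :=
      ((hf.contDiffAt (hs.mem_nhds (hmem τ hτ))).fderiv_right (m := 1)
        (by norm_num)).differentiableAt (by norm_num)
    have h0 : HasDerivAt (fun τ : ℝ => fderiv ℝ f (x + τ • d))
        (fderiv ℝ (fderiv ℝ f) (x + τ • d) d) τ :=
      hfd.hasFDerivAt.comp_hasDerivAt τ (hline τ)
    have h1 : HasDerivAt (fun τ : ℝ => fderiv ℝ f (x + τ • d) d)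
        (fderiv ℝ (fderiv ℝ f) (x + τ • d) d d) τ := by
      simpa using h0.clm_apply (hasDerivAt_const τ d)
    have h2 : HasDerivAt (fun τ : ℝ => C * τ) C τ := by
      simpa using (hasDerivAt_id τ).const_mul C
    exact h1.sub h2
  have hconc : ConcaveOn ℝ (Icc (-1 : ℝ) 1) (fun τ : ℝ => f (x + τ • d) - C * τ ^ 2 / 2) :=
    concaveOn_of_hasDerivWithinAt2_nonpos (convex_Icc _ _)
      (fun τ hτ => (hd1 τ hτ).continuousAt.continuousWithinAt)
      (fun τ hτ => (hd1 τ (interior_subset hτ)).hasDerivWithinAt)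
      (fun τ hτ => (hd2 τ (interior_subset hτ)).hasDerivWithinAt)
      (fun τ hτ => sub_nonpos.2 (hC _ (hmem τ (interior_subset hτ))))
  have := hconc.add_sub_le (x := 0) (d := 1) (by simp) (by simp)
  simp only [zero_add, zero_sub, one_smul, neg_smul, zero_smul, add_zero, ← sub_eq_add_neg] at this
  norm_num at this
  linarith

lemma ConcaveOn.fderiv_fderiv_nonpos {s : Set E} {f : E → ℝ} (hf : ConcaveOn ℝ s f)
    (hs : IsOpen s) (hf2 : ContDiffOn ℝ 2 f s) {x : E} (hx : x ∈ s) (d : E) :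
    fderiv ℝ (fderiv ℝ f) x d d ≤ 0 := by
  by_contra! hpos
  set c := fderiv ℝ (fderiv ℝ f) x d d / 2 with hc
  have hcont : ContinuousAt (fun z => fderiv ℝ (fderiv ℝ f) z d d) x := by
    have : ContinuousAt (fderiv ℝ (fderiv ℝ f)) x :=
      (((hf2.contDiffAt (hs.mem_nhds hx)).fderiv_right (m := 1) (by norm_num)).fderiv_right
        (m := 0) (by norm_num)).continuousAt
    fun_prop
  have hev : ∀ᶠ z in 𝓝 x, c < fderiv ℝ (fderiv ℝ f) z d d ∧ z ∈ s :=
    (hcont.eventually_const_lt (by linarith)).and (hs.mem_nhds hx)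
  obtain ⟨r, hr, hball⟩ := Metric.eventually_nhds_iff_ball.1 hev
  obtain ⟨τ, hτ, hτr⟩ : ∃ τ > (0 : ℝ), ‖τ • d‖ < r := by
    have : Filter.Tendsto (fun ε : ℝ => ‖ε • d‖) (𝓝 0) (𝓝 ‖(0 : ℝ) • d‖) :=
      Continuous.tendsto (by fun_prop) 0
    have hev : ∀ᶠ ε in 𝓝[>] (0 : ℝ), ‖ε • d‖ < r :=
      nhdsWithin_le_nhds (this.eventually_lt_const (by simpa using hr))
    obtain ⟨τ, h1, h2⟩ := (hev.and self_mem_nhdsWithin).exists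
    exact ⟨τ, h2, h1⟩
  have h₁ : x + τ • d ∈ Metric.ball x r := by simpa using hτr
  have h₂ : x - τ • d ∈ Metric.ball x r := by simpa [dist_eq_norm] using hτr
  have hub := add_sub_le_of_fderiv_fderiv_le (f := fun z => -f z) (C := -(τ ^ 2 * c))
    Metric.isOpen_ball (convex_ball x r) ((hf2.mono fun z hz => (hball z hz).2).neg) h₁ h₂
    (fun z hz => by
      have e : fderiv ℝ (fun z => -f z) = fun z => -fderiv ℝ f z := by
        ext1 z; exact fderiv_fun_neg
      rw [e, fderiv_fun_neg]
      simp only [map_smul, neg_apply, smul_eq_mul,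
        smul_apply]
      nlinarith [(hball z hz).1, pow_pos hτ 2])
  have hmid := hf.add_sub_le (hball _ h₁).2 (hball _ h₂).2
  nlinarith [pow_pos hτ 2, mul_pos (pow_pos hτ 2) (show 0 < c by linarith)]

/-- A nondegenerate negative semidefinite symmetric form is uniformly negative definite. -/
lemma exists_form_le_neg_norm_sq [FiniteDimensional ℝ E] (B : E →L[ℝ] E →L[ℝ] ℝ)
    (hsymm : ∀ v w, B v w = B w v) (hneg : ∀ v, B v v ≤ 0)
    (hnd : ∀ v, v ≠ 0 → ∃ w, B v w ≠ 0) : ∃ m > 0, ∀ v, B v v ≤ -m * ‖v‖ ^ 2 := by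
  have hlt : ∀ v, v ≠ 0 → B v v < 0 := fun v hv => by
    refine lt_of_le_of_ne (hneg v) fun h0 => ?_
    obtain ⟨w, hw⟩ := hnd v hv
    have key : ∀ s : ℝ, 2 * s * B v w + s ^ 2 * B w w ≤ 0 := fun s => by
      have := hneg (v + s • w)
      simp only [map_add, map_smul, add_apply,
        smul_apply, smul_eq_mul, h0, hsymm w v] at this
      linarith
    have hw2 := hneg w
    have h1 := key (B v w / (1 - B w w))
    have hpos : 0 < 1 - B w w := by linarith
    have hb : 0 < (B v w) ^ 2 := by positivity
    have e : 2 * (B v w / (1 - B w w)) * B v w + (B v w / (1 - B w w)) ^ 2 * B w w =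
      (B v w) ^ 2 * (2 - B w w) / (1 - B w w) ^ 2 := by
      field_simp; ring
    rw [e] at h1
    have : 0 < (B v w) ^ 2 * (2 - B w w) / (1 - B w w) ^ 2 := by
      have : 0 < 2 - B w w := by linarith
      positivity
    linarith
  rcases (Metric.sphere (0 : E) 1).eq_empty_or_nonempty with he | hne
  · refine ⟨1, one_pos, fun v => ?_⟩
    have hv : v = 0 := by
      by_contra hv
      have : (‖v‖⁻¹ • v) ∈ Metric.sphere (0 : E) 1 := by
        simp [norm_smul, inv_mul_cancel₀ (norm_ne_zero_iff.2 hv)]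
      rw [he] at this
      exact this
    simp [hv]
  · obtain ⟨v₀, hv₀, hmax⟩ := (isCompact_sphere (0 : E) 1).exists_isMaxOn hne
      (f := fun v => B v v) (by fun_prop)
    have hv₀ne : v₀ ≠ 0 := by
      rintro rfl; simp at hv₀
    refine ⟨-B v₀ v₀, by linarith [hlt v₀ hv₀ne], fun v => ?_⟩
    rcases eq_or_ne v 0 with rfl | hv
    · simp
    have hn : ‖v‖ ≠ 0 := norm_ne_zero_iff.2 hv
    have hmem : (‖v‖⁻¹ • v) ∈ Metric.sphere (0 : E) 1 := by
      simp [norm_smul, inv_mul_cancel₀ hn]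
    have := hmax hmem
    simp only [mem_ofPred_eq, map_smul, smul_apply, smul_eq_mul] at this
    have h3 := mul_le_mul_of_nonneg_left this (sq_nonneg ‖v‖)
    have e : ‖v‖ ^ 2 * (‖v‖⁻¹ * (‖v‖⁻¹ * B v v)) = B v v := by field_simp
    rw [e] at h3
    linarith

end Concavity

section Perturbation

lemma HasCompactSupport.exists_nonneg_norm_le {X V : Type*} [TopologicalSpace X] [Nonempty X]
    [NormedAddCommGroup V] {φ : X → V} (h : HasCompactSupport φ) (hφ : Continuous φ) :
    ∃ C ≥ 0, ∀ z, ‖φ z‖ ≤ C := by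
  obtain ⟨C, hC⟩ := hφ.bounded_above_of_compact_support h
  exact ⟨C, (norm_nonneg _).trans (hC (Classical.arbitrary X)), hC⟩

variable {E : Type*} [NormedAddCommGroup E] [NormedSpace ℝ E]

lemma HasCompactSupport.exists_second_difference_le {φ : E → ℝ} (hφc : HasCompactSupport φ)
    (hφ : ContDiff ℝ 2 φ) :
    ∃ C ≥ 0, ∀ x d, φ (x + d) + φ (x - d) ≤ 2 * φ x + C * ‖d‖ ^ 2 := by
  have hφ1 : ContDiff ℝ 1 (fderiv ℝ φ) := hφ.fderiv_right (by norm_num)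
  have hφ2 : Continuous (fderiv ℝ (fderiv ℝ φ)) :=
    (hφ1.fderiv_right (m := 0) (by norm_num)).continuous
  have hc1 : HasCompactSupport (fderiv ℝ φ) := hφc.fderiv ℝ
  have hc2 : HasCompactSupport (fderiv ℝ (fderiv ℝ φ)) := hc1.fderiv ℝ
  obtain ⟨C, hC0, hC⟩ : ∃ C ≥ 0, ∀ z, ‖fderiv ℝ (fderiv ℝ φ) z‖ ≤ C :=
    HasCompactSupport.exists_nonneg_norm_le (V := E →L[ℝ] E →L[ℝ] ℝ) hc2 hφ2
  refine ⟨C, hC0, fun x d => ?_⟩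
  refine add_sub_le_of_fderiv_fderiv_le isOpen_univ convex_univ hφ.contDiffOn
    (mem_univ _) (mem_univ _) fun z _ => ?_
  calc fderiv ℝ (fderiv ℝ φ) z d d ≤ ‖fderiv ℝ (fderiv ℝ φ) z d d‖ := Real.le_norm_self _
    _ ≤ ‖fderiv ℝ (fderiv ℝ φ) z‖ * ‖d‖ * ‖d‖ := ContinuousLinearMap.le_opNorm₂ _ d d
    _ = ‖fderiv ℝ (fderiv ℝ φ) z‖ * ‖d‖ ^ 2 := by ring
    _ ≤ C * ‖d‖ ^ 2 := by gcongr; exact hC z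

/-- A small smooth perturbation supported where a concave function is uniformly concave keeps it
concave. -/
lemma ConcaveOn.exists_forall_add_mul {s b : Set E} {u φ : E → ℝ} {m : ℝ}
    (hu : ConcaveOn ℝ s u) (hs : IsOpen s) (hus : ContinuousOn u s) (hb : IsOpen b) (hm : 0 < m)
    (hneg : ∀ x d, x + d ∈ b → x - d ∈ b → u (x + d) + u (x - d) ≤ 2 * u x + -m * ‖d‖ ^ 2)
    (hφ : ContDiff ℝ 2 φ) (hφc : HasCompactSupport φ) (hφb : tsupport φ ⊆ b) :
    ∃ t₀ > 0, ∀ t : ℝ, |t| ≤ t₀ → ConcaveOn ℝ s (fun x => u x + t * φ x) := by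
  obtain ⟨C, hC0, hC⟩ := hφc.exists_second_difference_le hφ
  obtain ⟨C', hC0', hC'⟩ := hφc.neg.exists_second_difference_le hφ.neg
  refine ⟨m / (C + C' + 1), by positivity, fun t ht => ?_⟩
  rw [le_div_iff₀ (by positivity)] at ht
  refine concaveOn_of_local_midpoint hu.1
    (hus.add (continuous_const.mul hφ.continuous).continuousOn) fun x hx => ?_
  by_cases hxφ : x ∈ tsupport φ
  · obtain ⟨r, hr, hball⟩ := Metric.isOpen_iff.1 hb x (hφb hxφ)
    refine ⟨r, hr, fun d hd => ?_⟩
    have h3 := hneg x d (hball (by simpa using hd)) (hball (by simpa [dist_eq_norm] using hd))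
    have h4 : |φ (x + d) + φ (x - d) - 2 * φ x| ≤ (C + C' + 1) * ‖d‖ ^ 2 := by
      have h5 := hC x d
      have h6 := hC' x d
      simp only [Pi.neg_apply] at h6
      have h7 := mul_nonneg hC0 (sq_nonneg ‖d‖)
      have h8 := mul_nonneg hC0' (sq_nonneg ‖d‖)
      rw [abs_le]
      constructor <;> linarith [sq_nonneg ‖d‖]
    have h5 : t * (φ (x + d) + φ (x - d) - 2 * φ x) ≤ m * ‖d‖ ^ 2 :=
      calc t * (φ (x + d) + φ (x - d) - 2 * φ x)
          ≤ |t| * |φ (x + d) + φ (x - d) - 2 * φ x| := by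
            rw [← abs_mul]; exact le_abs_self _
        _ ≤ |t| * ((C + C' + 1) * ‖d‖ ^ 2) := by gcongr
        _ = |t| * (C + C' + 1) * ‖d‖ ^ 2 := by ring
        _ ≤ m * ‖d‖ ^ 2 := by gcongr
    linarith
  · obtain ⟨r, hr, hball⟩ := Metric.isOpen_iff.1
      (hs.inter (isClosed_tsupport φ).isOpen_compl) x ⟨hx, hxφ⟩
    refine ⟨r, hr, fun d hd => ?_⟩
    have h₁ := hball (show x + d ∈ Metric.ball x r by simpa using hd)
    have h₂ := hball (show x - d ∈ Metric.ball x r by simpa [dist_eq_norm] using hd)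
    have h3 := hu.add_sub_le h₁.1 h₂.1
    simp only [image_eq_zero_of_notMem_tsupport h₁.2, image_eq_zero_of_notMem_tsupport h₂.2,
      image_eq_zero_of_notMem_tsupport hxφ]
    linarith

end Perturbation

section Gradient

variable {F : Type*} [NormedAddCommGroup F] [InnerProductSpace ℝ F]

/-- An upper bound for the symmetric second difference of `p ↦ 1 / (‖p‖ ^ 2 + 1)` near `p₀`,
negative in directions orthogonal to `p₀`. -/
lemma inv_norm_sq_add_one_second_difference_le {p p₀ q : F} (hp : ‖p - p₀‖ ≤ 1 / 8)
    (hq : ‖q‖ ≤ 1) :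
    1 / (‖p + q‖ ^ 2 + 1) + 1 / (‖p - q‖ ^ 2 + 1) - 2 * (1 / (‖p‖ ^ 2 + 1)) ≤
      2 * (8 * ⟪p₀, q⟫ ^ 2 - 7 / 8 / (1 + (‖p₀‖ + 2) ^ 2) ^ 3 * ‖q‖ ^ 2) := by
  set K := 1 + (‖p₀‖ + 2) ^ 2 with hK
  have hpn : ‖p‖ ≤ ‖p₀‖ + 1 / 8 := by
    have := norm_add_le p₀ (p - p₀)
    rw [add_sub_cancel] at this
    linarith
  have ha : ‖p‖ ^ 2 + 1 ≤ K := by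
    have : ‖p‖ ^ 2 ≤ (‖p₀‖ + 2) ^ 2 := by gcongr; linarith
    linarith
  have hA : ‖p + q‖ ^ 2 + 1 ≤ K := by
    have : ‖p + q‖ ^ 2 ≤ (‖p₀‖ + 2) ^ 2 := by gcongr; linarith [norm_add_le p q]
    linarith
  have hB : ‖p - q‖ ^ 2 + 1 ≤ K := by
    have : ‖p - q‖ ^ 2 ≤ (‖p₀‖ + 2) ^ 2 := by gcongr; linarith [norm_sub_le p q]
    linarith
  have hr : ⟪p - p₀, q⟫ ^ 2 ≤ ‖q‖ ^ 2 / 64 := by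
    have h1 := abs_real_inner_le_norm (p - p₀) q
    have h2 : ‖p - p₀‖ * ‖q‖ ≤ 1 / 8 * ‖q‖ := by gcongr
    calc ⟪p - p₀, q⟫ ^ 2 = |⟪p - p₀, q⟫| ^ 2 := (sq_abs _).symm
      _ ≤ (1 / 8 * ‖q‖) ^ 2 := by gcongr; exact h1.trans h2
      _ = ‖q‖ ^ 2 / 64 := by ring
  have hs : 4 * ⟪p, q⟫ ^ 2 ≤ 8 * ⟪p₀, q⟫ ^ 2 + ‖q‖ ^ 2 / 8 := by
    have e : ⟪p, q⟫ = ⟪p₀, q⟫ + ⟪p - p₀, q⟫ := by rw [← inner_add_left, add_sub_cancel]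
    rw [e]
    nlinarith [sq_nonneg (⟪p₀, q⟫ - ⟪p - p₀, q⟫)]
  have ea := norm_add_sq_real p q
  have eb := norm_sub_sq_real p q
  have ha1 : 1 ≤ ‖p‖ ^ 2 + 1 := by nlinarith [sq_nonneg ‖p‖]
  have hA1 : 1 ≤ ‖p + q‖ ^ 2 + 1 := by nlinarith [sq_nonneg ‖p + q‖]
  have hB1 : 1 ≤ ‖p - q‖ ^ 2 + 1 := by nlinarith [sq_nonneg ‖p - q‖]
  have hAp : ‖p + q‖ ^ 2 + 1 = ‖p‖ ^ 2 + 1 + ‖q‖ ^ 2 + 2 * ⟪p, q⟫ := by linarith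
  have hBp : ‖p - q‖ ^ 2 + 1 = ‖p‖ ^ 2 + 1 + ‖q‖ ^ 2 - 2 * ⟪p, q⟫ := by linarith
  have hQ := sq_nonneg ‖q‖
  generalize ‖p + q‖ ^ 2 + 1 = A at *
  generalize ‖p - q‖ ^ 2 + 1 = B at *
  generalize ‖p‖ ^ 2 + 1 = a at *
  generalize ‖q‖ ^ 2 = Q at *
  generalize ⟪p, q⟫ = s at *
  have hD0 : 1 ≤ a * A * B := one_le_mul_of_one_le_of_one_le
    (one_le_mul_of_one_le_of_one_le ha1 hA1) hB1
  have hDK : a * A * B ≤ K ^ 3 := by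
    rw [pow_three', mul_assoc, mul_assoc]
    gcongr
  have hK0 : 0 < K ^ 3 := by linarith
  have e : 1 / A + 1 / B - 2 * (1 / a) = 2 * ((4 * s ^ 2 - Q * (a + Q)) / (a * A * B)) := by
    have : a ≠ 0 := by positivity
    have : A ≠ 0 := by positivity
    have : B ≠ 0 := by positivity
    field_simp
    rw [hAp, hBp]
    ring
  rw [e]
  have h1 : (4 * s ^ 2 - Q * (a + Q)) / (a * A * B) ≤
      (8 * ⟪p₀, q⟫ ^ 2 - 7 / 8 * Q) / (a * A * B) := by
    refine div_le_div_of_nonneg_right ?_ (by positivity)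
    nlinarith
  have h2 : 8 * ⟪p₀, q⟫ ^ 2 / (a * A * B) ≤ 8 * ⟪p₀, q⟫ ^ 2 :=
    div_le_self (by positivity) hD0
  have h3 : 7 / 8 * Q / K ^ 3 ≤ 7 / 8 * Q / (a * A * B) := by gcongr
  have h4 : 7 / 8 / K ^ 3 * Q = 7 / 8 * Q / K ^ 3 := by ring
  rw [sub_div (8 * _)] at h1
  linarith

variable [CompleteSpace F]

lemma gradient_eq_zero_of_notMem_tsupport {φ : F → ℝ} {x : F} (hx : x ∉ tsupport φ) :
    gradient φ x = 0 := by
  rw [gradient, fderiv_of_notMem_tsupport ℝ hx, map_zero]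

lemma gradient_add_mul {u φ : F → ℝ} {x : F} (t : ℝ) (hφ : DifferentiableAt ℝ φ x)
    (h : DifferentiableAt ℝ u x ∨ x ∉ tsupport φ) :
    gradient (fun y => u y + t * φ y) x = gradient u x + t • gradient φ x := by
  rcases h with h | h
  · rw [gradient, fderiv_fun_add h (hφ.const_mul t), fderiv_const_mul hφ, map_add,
      LinearIsometryEquiv.map_smulₛₗ]
    rfl
  · have e : (fun y => u y + t * φ y) =ᶠ[𝓝 x] u := by
      filter_upwards [(isClosed_tsupport φ).isOpen_compl.mem_nhds h] with y hy
      rw [image_eq_zero_of_notMem_tsupport hy, mul_zero, add_zero]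
    rw [e.gradient_eq, gradient_eq_zero_of_notMem_tsupport h, smul_zero, add_zero]

lemma hasGradientAt_mul_comp_inner {η : F → ℝ} {x e : F} {h : ℝ → ℝ} {h' : ℝ}
    (hη : DifferentiableAt ℝ η x) (hh : HasDerivAt h h' ⟪e, x⟫) :
    HasGradientAt (fun y => η y * h ⟪e, y⟫)
      (h ⟪e, x⟫ • gradient η x + (η x * h') • e) x := by
  rw [hasGradientAt_iff_hasFDerivAt]
  have h1 : HasFDerivAt (fun y => h ⟪e, y⟫) (h' • innerSL ℝ e) x :=
    hh.comp_hasFDerivAt x (innerSL ℝ e).hasFDerivAt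
  refine (hη.hasFDerivAt.mul h1).congr_fderiv ?_
  ext v
  simp
  ring

lemma measurable_gradient_s5 [MeasurableSpace F] [BorelSpace F] (u : F → ℝ) :
    Measurable (gradient u) :=
  (InnerProductSpace.toDual ℝ F).symm.continuous.measurable.comp (measurable_fderiv ℝ u)

end Gradient

section SecondVariation

lemma integrableOn_resistance (u : EuclideanSpace ℝ (Fin 2) → ℝ) :
    IntegrableOn (fun x => 1 / (‖gradient u x‖ ^ 2 + 1)) Omega := by
  refine Measure.integrableOn_of_bounded (M := 1) measure_ball_lt_top.ne ?_ ?_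
  · have := measurable_gradient_s5 u
    exact (by fun_prop : Measurable fun x => 1 / (‖gradient u x‖ ^ 2 + 1)).aestronglyMeasurable
  · filter_upwards with x
    have h : 1 ≤ ‖gradient u x‖ ^ 2 + 1 := by nlinarith [sq_nonneg ‖gradient u x‖]
    rw [Real.norm_of_nonneg (by positivity)]
    exact (div_le_one (by positivity)).2 h

/-- The second difference of `J` in a direction `φ` supported where `∇u` is close to `p₀`. -/
lemma J_second_difference_le {u φ : EuclideanSpace ℝ (Fin 2) → ℝ}
    {p₀ : EuclideanSpace ℝ (Fin 2)} {b : Set (EuclideanSpace ℝ (Fin 2))} {t : ℝ}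
    (hu : ∀ x ∈ b, DifferentiableAt ℝ u x) (hp : ∀ x ∈ b, ‖gradient u x - p₀‖ ≤ 1 / 8)
    (hφ : Differentiable ℝ φ) (hφb : tsupport φ ⊆ b) (ht : ∀ x, ‖t • gradient φ x‖ ≤ 1)
    (hint : IntegrableOn (fun x => 8 * ⟪p₀, gradient φ x⟫ ^ 2 -
      7 / 8 / (1 + (‖p₀‖ + 2) ^ 2) ^ 3 * ‖gradient φ x‖ ^ 2) Omega) :
    J (fun x => u x + t * φ x) + J (fun x => u x + -t * φ x) - 2 * J u ≤
      2 * t ^ 2 * ∫ x in Omega, (8 * ⟪p₀, gradient φ x⟫ ^ 2 -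
        7 / 8 / (1 + (‖p₀‖ + 2) ^ 2) ^ 3 * ‖gradient φ x‖ ^ 2) := by
  have i₁ := integrableOn_resistance (fun x => u x + t * φ x)
  have i₂ := integrableOn_resistance (fun x => u x + -t * φ x)
  have i₁₂ : IntegrableOn (fun x => 1 / (‖gradient (fun x => u x + t * φ x) x‖ ^ 2 + 1) +
      1 / (‖gradient (fun x => u x + -t * φ x) x‖ ^ 2 + 1)) Omega := i₁.add i₂
  have i₃ := (integrableOn_resistance u).const_mul 2
  have e : J (fun x => u x + t * φ x) + J (fun x => u x + -t * φ x) - 2 * J u =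
      ∫ x in Omega, (1 / (‖gradient (fun x => u x + t * φ x) x‖ ^ 2 + 1) +
        1 / (‖gradient (fun x => u x + -t * φ x) x‖ ^ 2 + 1) -
        2 * (1 / (‖gradient u x‖ ^ 2 + 1))) := by
    rw [integral_sub i₁₂ i₃, integral_add i₁ i₂, integral_const_mul]
    rfl
  rw [e, ← integral_const_mul]
  refine integral_mono (i₁₂.sub i₃) (hint.const_mul _) fun x => ?_
  have hor : DifferentiableAt ℝ u x ∨ x ∉ tsupport φ := by
    by_cases hx : x ∈ tsupport φ
    · exact Or.inl (hu x (hφb hx))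
    · exact Or.inr hx
  simp only [gradient_add_mul _ (hφ x) hor]
  by_cases hx : x ∈ tsupport φ
  · have := inv_norm_sq_add_one_second_difference_le (hp x (hφb hx)) (ht x)
    rw [neg_smul, ← sub_eq_add_neg]
    refine this.trans_eq ?_
    rw [inner_smul_right, norm_smul, Real.norm_eq_abs, mul_pow |t|, sq_abs]
    ring
  · simp only [gradient_eq_zero_of_notMem_tsupport hx, smul_zero, add_zero, inner_zero_right,
      norm_zero]
    linarith

lemma exists_ne_zero_inner_eq_zero (p : EuclideanSpace ℝ (Fin 2)) :
    ∃ e : EuclideanSpace ℝ (Fin 2), e ≠ 0 ∧ ⟪p, e⟫ = 0 := by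
  have h : LinearMap.ker (innerSL ℝ p).toLinearMap ≠ ⊥ :=
    LinearMap.ker_ne_bot_of_finrank_lt (by simp)
  obtain ⟨e, he, hne⟩ := Submodule.exists_mem_ne_zero_of_ne_bot h
  exact ⟨e, hne, by simpa using he⟩

lemma continuous_gradient {φ : EuclideanSpace ℝ (Fin 2) → ℝ} (hφ : ContDiff ℝ 2 φ) :
    Continuous (gradient φ) :=
  (InnerProductSpace.toDual ℝ _).symm.continuous.comp (hφ.continuous_fderiv (by norm_num))

lemma integrableOn_Omega_of_continuous {g : EuclideanSpace ℝ (Fin 2) → ℝ} (hg : Continuous g) :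
    IntegrableOn g Omega :=
  (hg.continuousOn.integrableOn_compact (isCompact_closedBall 0 1)).mono_set
    Metric.ball_subset_closedBall

lemma exists_pos_forall_norm_smul_gradient_le {φ : EuclideanSpace ℝ (Fin 2) → ℝ}
    (hφ : ContDiff ℝ 2 φ) (hc : HasCompactSupport φ) :
    ∃ t₀ > 0, ∀ t : ℝ, |t| ≤ t₀ → ∀ x, ‖t • gradient φ x‖ ≤ 1 := by
  obtain ⟨C, hC0, hC⟩ := HasCompactSupport.exists_nonneg_norm_le (φ := gradient φ)
    (hc.mono' fun x hx => by
      by_contra h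
      exact hx (gradient_eq_zero_of_notMem_tsupport h)) (continuous_gradient hφ)
  refine ⟨1 / (C + 1), by positivity, fun t ht x => ?_⟩
  rw [le_div_iff₀ (by positivity)] at ht
  rw [norm_smul, Real.norm_eq_abs]
  nlinarith [mul_le_mul_of_nonneg_left (hC x) (abs_nonneg t), abs_nonneg t]

/-- Where `∇u` is close to a constant, the second variation of `J` is negative along one of two
test functions oscillating in a direction orthogonal to that constant. -/
lemma exists_second_variation_neg {u : EuclideanSpace ℝ (Fin 2) → ℝ}
    {x₁ p₀ : EuclideanSpace ℝ (Fin 2)} {ρ : ℝ} (hρ : 0 < ρ) (hsub : Metric.ball x₁ ρ ⊆ Omega)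
    (hu : ∀ x ∈ Metric.ball x₁ ρ, DifferentiableAt ℝ u x)
    (hp : ∀ x ∈ Metric.ball x₁ ρ, ‖gradient u x - p₀‖ ≤ 1 / 8) :
    ∃ φ : EuclideanSpace ℝ (Fin 2) → ℝ, ContDiff ℝ 2 φ ∧ HasCompactSupport φ ∧
      tsupport φ ⊆ Metric.ball x₁ ρ ∧ ∃ t₀ > 0, ∀ t : ℝ, 0 < t → t ≤ t₀ →
        J (fun x => u x + t * φ x) + J (fun x => u x + -t * φ x) < 2 * J u := by
  obtain ⟨e, he, hpe⟩ := exists_ne_zero_inner_eq_zero p₀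
  let η : ContDiffBump x₁ := ⟨ρ / 4, ρ / 2, by positivity, by linarith⟩
  have hη : ContDiff ℝ 2 η := η.contDiff
  have hηd : Differentiable ℝ η := hη.differentiable (by norm_num)
  have hηb : tsupport η ⊆ Metric.ball x₁ ρ := by
    rw [η.tsupport_eq]
    exact Metric.closedBall_subset_ball (by show ρ / 2 < ρ; linarith)
  set κ : ℝ := 7 / 8 / (1 + (‖p₀‖ + 2) ^ 2) ^ 3 with hκ
  have hκ0 : 0 < κ := by positivity
  set a : ℝ := ∫ x in Omega, ⟪p₀, gradient η x⟫ ^ 2 with ha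
  have ha0 : 0 ≤ a := integral_nonneg fun x => sq_nonneg _
  have hI0 : 0 < ∫ x in Omega, η x ^ 2 := by
    rw [setIntegral_eq_integral_of_forall_compl_eq_zero fun x hx => by
      rw [image_eq_zero_of_notMem_tsupport fun h => hx (hsub (hηb h))]; norm_num]
    refine Continuous.integral_pos_of_hasCompactSupport_nonneg_nonzero (x := x₁)
      (η.continuous.pow 2) (η.hasCompactSupport.comp_left (g := fun y : ℝ => y ^ 2) (by simp))
      (fun x => sq_nonneg _) ?_
    exact (pow_pos (η.pos_of_mem_ball (Metric.mem_ball_self η.rOut_pos)) 2).ne'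
  set I : ℝ := ∫ x in Omega, η x ^ 2 with hI
  set c : ℝ := κ * ‖e‖ ^ 2 * I with hc
  have hc0 : 0 < c := by positivity
  set k : ℝ := 8 * a / c + 1 with hk
  have hk1 : 1 ≤ k := le_add_of_nonneg_left (by positivity)
  have hkc : 8 * a < k ^ 2 * c := by
    have : k * c = 8 * a + c := by rw [hk]; field_simp
    nlinarith [mul_le_mul_of_nonneg_right hk1 (by positivity : 0 ≤ k * c)]
  have hgrad : ∀ {h h' : ℝ → ℝ}, (∀ s, HasDerivAt h (h' s) s) → ∀ x,
      gradient (fun y => η y * h ⟪k • e, y⟫) x =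
        h ⟪k • e, x⟫ • gradient η x + (η x * h' ⟪k • e, x⟫) • (k • e) := fun hh x =>
    (hasGradientAt_mul_comp_inner (hηd x) (hh _)).gradient
  set φ₁ : EuclideanSpace ℝ (Fin 2) → ℝ := fun y => η y * Real.sin ⟪k • e, y⟫ with hφ₁
  set φ₂ : EuclideanSpace ℝ (Fin 2) → ℝ := fun y => η y * Real.cos ⟪k • e, y⟫ with hφ₂
  set Q : (EuclideanSpace ℝ (Fin 2) → ℝ) → EuclideanSpace ℝ (Fin 2) → ℝ :=
    fun φ x => 8 * ⟪p₀, gradient φ x⟫ ^ 2 - κ * ‖gradient φ x‖ ^ 2 with hQ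
  have hs₁ : ContDiff ℝ 2 φ₁ :=
    hη.mul (Real.contDiff_sin.comp (innerSL ℝ (k • e)).contDiff)
  have hs₂ : ContDiff ℝ 2 φ₂ :=
    hη.mul (Real.contDiff_cos.comp (innerSL ℝ (k • e)).contDiff)
  have hQi : ∀ φ, ContDiff ℝ 2 φ → IntegrableOn (Q φ) Omega := fun φ hφ => by
    have := continuous_gradient hφ
    exact integrableOn_Omega_of_continuous (by fun_prop)
  have hsum : ∀ x, Q φ₁ x + Q φ₂ x ≤
      8 * ⟪p₀, gradient η x⟫ ^ 2 - κ * (k ^ 2 * ‖e‖ ^ 2) * η x ^ 2 := fun x => by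
    have g₁ := hgrad Real.hasDerivAt_sin x
    have g₂ := hgrad Real.hasDerivAt_cos x
    simp only [hQ, hφ₁, hφ₂, g₁, g₂]
    have hsc := Real.sin_sq_add_cos_sq ⟪k • e, x⟫
    generalize Real.sin ⟪k • e, x⟫ = s at *
    generalize Real.cos ⟪k • e, x⟫ = r at *
    simp only [inner_add_right, inner_smul_right, hpe, mul_zero, add_zero, norm_add_sq_real,
      norm_smul, inner_smul_left, mul_pow, Real.norm_eq_abs, sq_abs, neg_sq]
    have h0 : 0 ≤ κ * ‖gradient η x‖ ^ 2 := by positivity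
    simp only [conj_trivial]
    have hr : r ^ 2 = 1 - s ^ 2 := by linarith
    rw [hr]
    linarith
  have hneg : ∫ x in Omega, Q φ₁ x + Q φ₂ x < 0 := by
    have hg := continuous_gradient hη
    have i₁ : IntegrableOn (fun x => 8 * ⟪p₀, gradient η x⟫ ^ 2) Omega :=
      integrableOn_Omega_of_continuous (by fun_prop)
    have i₂ : IntegrableOn (fun x => κ * (k ^ 2 * ‖e‖ ^ 2) * η x ^ 2) Omega :=
      integrableOn_Omega_of_continuous (by fun_prop)
    refine (integral_mono ((hQi φ₁ hs₁).add (hQi φ₂ hs₂)) (i₁.sub i₂) hsum).trans_lt ?_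
    have := integral_sub i₁ i₂
    simp only [Pi.sub_apply] at this ⊢
    rw [this, integral_const_mul, integral_const_mul, ← ha, ← hI]
    rw [hc] at hkc
    linarith
  rw [integral_add (hQi φ₁ hs₁) (hQi φ₂ hs₂)] at hneg
  obtain ⟨φ, hs, hφη, hφneg⟩ : ∃ φ : EuclideanSpace ℝ (Fin 2) → ℝ, ContDiff ℝ 2 φ ∧
      tsupport φ ⊆ tsupport η ∧ ∫ x in Omega, Q φ x < 0 := by
    by_cases h : ∫ x in Omega, Q φ₁ x < 0
    · exact ⟨φ₁, hs₁, tsupport_mul_subset_left, h⟩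
    · exact ⟨φ₂, hs₂, tsupport_mul_subset_left, by linarith⟩
  have hcomp : HasCompactSupport φ :=
    η.hasCompactSupport.of_isClosed_subset (isClosed_tsupport φ) hφη
  obtain ⟨t₀, ht₀, hbd⟩ := exists_pos_forall_norm_smul_gradient_le hs hcomp
  refine ⟨φ, hs, hcomp, hφη.trans hηb, t₀, ht₀, fun t ht htt => ?_⟩
  have := J_second_difference_le hu hp (hs.differentiable (by norm_num)) (hφη.trans hηb)
    (hbd t (by rwa [abs_of_pos ht])) (hQi φ hs)
  have : 2 * t ^ 2 * ∫ x in Omega, Q φ x < 0 := mul_neg_of_pos_of_neg (by positivity) hφneg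
  linarith

end SecondVariation

section Main

/-- A concave function that is `C²` with nondegenerate Hessian at a point is uniformly concave near
this point. -/
lemma ConcaveOn.exists_ball_add_sub_le {E : Type*} [NormedAddCommGroup E] [NormedSpace ℝ E]
    [FiniteDimensional ℝ E] {s : Set E} {u : E → ℝ} {x₀ : E} (hs : IsOpen s)
    (hu : ∀ r, Metric.ball x₀ r ⊆ s → ConcaveOn ℝ (Metric.ball x₀ r) u)
    (hreg : ContDiffOn ℝ 2 u s) (hx₀ : x₀ ∈ s)
    (hnd : ∀ v, v ≠ 0 → ∃ w, fderiv ℝ (fderiv ℝ u) x₀ v w ≠ 0) :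
    ∃ r > 0, Metric.ball x₀ r ⊆ s ∧ ∃ m > 0, ∀ x d, x + d ∈ Metric.ball x₀ r →
      x - d ∈ Metric.ball x₀ r → u (x + d) + u (x - d) ≤ 2 * u x + -m * ‖d‖ ^ 2 := by
  obtain ⟨r₀, hr₀, hb₀⟩ := Metric.isOpen_iff.1 hs x₀ hx₀
  obtain ⟨m, hm, hB⟩ := exists_form_le_neg_norm_sq (fderiv ℝ (fderiv ℝ u) x₀)
    ((hreg.contDiffAt (hs.mem_nhds hx₀)).isSymmSndFDerivAt (by simp))
    ((hu r₀ hb₀).fderiv_fderiv_nonpos Metric.isOpen_ball (hreg.mono hb₀)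
      (Metric.mem_ball_self hr₀)) hnd
  have hcont : ContinuousAt (fderiv ℝ (fderiv ℝ u)) x₀ :=
    (((hreg.fderiv_of_isOpen (m := 1) hs (by norm_num)).fderiv_of_isOpen (m := 0) hs
      (by norm_num)).continuousOn).continuousAt (hs.mem_nhds hx₀)
  obtain ⟨r₁, hr₁, hb₁⟩ := (Metric.continuousAt_iff (β := E →L[ℝ] E →L[ℝ] ℝ)).1 hcont (m / 2)
    (half_pos hm)
  have hsub : Metric.ball x₀ (min r₀ r₁) ⊆ s :=
    (Metric.ball_subset_ball (min_le_left _ _)).trans hb₀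
  refine ⟨min r₀ r₁, lt_min hr₀ hr₁, hsub, m / 2, by positivity, fun x d h₁ h₂ => ?_⟩
  refine add_sub_le_of_fderiv_fderiv_le Metric.isOpen_ball (convex_ball x₀ _) (hreg.mono hsub)
    h₁ h₂ fun z hz => ?_
  have hz : ‖fderiv ℝ (fderiv ℝ u) z - fderiv ℝ (fderiv ℝ u) x₀‖ ≤ m / 2 :=
    (dist_eq_norm (E := E →L[ℝ] E →L[ℝ] ℝ) _ _).symm.trans_le
      (hb₁ (Metric.ball_subset_ball (min_le_right _ _) hz)).le
  have hzd : (fderiv ℝ (fderiv ℝ u) z - fderiv ℝ (fderiv ℝ u) x₀) d d ≤ m / 2 * ‖d‖ ^ 2 :=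
    calc (fderiv ℝ (fderiv ℝ u) z - fderiv ℝ (fderiv ℝ u) x₀) d d
        ≤ ‖(fderiv ℝ (fderiv ℝ u) z - fderiv ℝ (fderiv ℝ u) x₀) d d‖ := Real.le_norm_self _
      _ ≤ ‖fderiv ℝ (fderiv ℝ u) z - fderiv ℝ (fderiv ℝ u) x₀‖ * ‖d‖ * ‖d‖ :=
        ContinuousLinearMap.le_opNorm₂ _ d d
      _ = ‖fderiv ℝ (fderiv ℝ u) z - fderiv ℝ (fderiv ℝ u) x₀‖ * ‖d‖ ^ 2 := by ring
      _ ≤ m / 2 * ‖d‖ ^ 2 := by gcongr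
  have := hB d
  simp only [sub_apply] at hzd
  linarith

/-- A uniformly concave function with values in `[0, M]` takes values in `(0, M)`. -/
lemma exists_mem_Ioo_of_add_sub_le {E : Type*} [NormedAddCommGroup E] [NormedSpace ℝ E]
    [Nontrivial E] {u : E → ℝ} {x₀ : E} {r m M : ℝ} (hr : 0 < r) (hm : 0 < m)
    (huM : ∀ x ∈ Metric.ball x₀ r, u x ∈ Icc 0 M)
    (hmid : ∀ x d, x + d ∈ Metric.ball x₀ r → x - d ∈ Metric.ball x₀ r →
      u (x + d) + u (x - d) ≤ 2 * u x + -m * ‖d‖ ^ 2) :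
    ∃ x₁ ∈ Metric.ball x₀ r, u x₁ ∈ Ioo 0 M := by
  have hstep : ∀ x ∈ Metric.ball x₀ r, ∃ y ∈ Metric.ball x₀ r, ∃ z ∈ Metric.ball x₀ r,
      u y + u z < 2 * u x := fun x hx => by
    obtain ⟨ε, hε, hb⟩ := Metric.isOpen_iff.1 Metric.isOpen_ball x hx
    obtain ⟨d, hd⟩ := exists_norm_eq E (half_pos hε).le
    have h₁ : x + d ∈ Metric.ball x₀ r := hb (by simpa [hd] using hε)
    have h₂ : x - d ∈ Metric.ball x₀ r := hb (by simpa [dist_eq_norm, hd] using hε)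
    have hmd : 0 < m * ‖d‖ ^ 2 := by rw [hd]; positivity
    exact ⟨_, h₁, _, h₂, by linarith [hmid x d h₁ h₂]⟩
  have hpos : ∀ x ∈ Metric.ball x₀ r, 0 < u x := fun x hx => by
    obtain ⟨y, hy, z, hz, h⟩ := hstep x hx
    linarith [(huM y hy).1, (huM z hz).1]
  obtain ⟨y, hy, z, hz, h⟩ := hstep x₀ (Metric.mem_ball_self hr)
  have hx₀ := (huM x₀ (Metric.mem_ball_self hr)).2
  by_cases hyM : u y < M
  · exact ⟨y, hy, hpos y hy, hyM⟩
  · exact ⟨z, hz, hpos z hz, by linarith⟩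

/-- On any open subset of `Ω` where a minimizer of Newton's problem is `C²`,
the Hessian is everywhere degenerate: at every point there is a nonzero vector
annihilated by the Hessian bilinear form `D²u(x)`. -/
theorem minimizer_hessian_degenerate (M : ℝ) (hM : 0 < M)
    (u : EuclideanSpace ℝ (Fin 2) → ℝ)
    (hu : ConcaveOn ℝ Omega u) (huM : ∀ x ∈ Omega, u x ∈ Icc 0 M)
    (hmin : ∀ v : EuclideanSpace ℝ (Fin 2) → ℝ,
      ConcaveOn ℝ Omega v → (∀ x ∈ Omega, v x ∈ Icc 0 M) → J u ≤ J v)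
    (ω : Set (EuclideanSpace ℝ (Fin 2))) (hω : IsOpen ω) (hωΩ : ω ⊆ Omega)
    (hreg : ContDiffOn ℝ 2 u ω) :
    ∀ x ∈ ω, ∃ v : EuclideanSpace ℝ (Fin 2), v ≠ 0 ∧
      ∀ w : EuclideanSpace ℝ (Fin 2), iteratedFDeriv ℝ 2 u x ![v, w] = 0 := by
  intro x₀ hx₀
  by_contra! hnd
  simp only [iteratedFDeriv_two_apply, Matrix.cons_val_zero, Matrix.cons_val_one] at hnd
  obtain ⟨r, hr, hrω, m, hm, hmid⟩ := ConcaveOn.exists_ball_add_sub_le hω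
    (fun r hb => hu.subset (hb.trans hωΩ) (convex_ball x₀ r)) hreg hx₀ hnd
  obtain ⟨x₁, hx₁, hux₁⟩ :=
    exists_mem_Ioo_of_add_sub_le hr hm (fun x hx => huM x (hωΩ (hrω hx))) hmid
  obtain ⟨δ, hδ, hδ₁⟩ : ∃ δ > 0, u x₁ ∈ Ioo δ (M - δ) :=
    ⟨min (u x₁) (M - u x₁) / 2, half_pos (lt_min hux₁.1 (sub_pos.2 hux₁.2)), by
      have h₁ := min_le_left (u x₁) (M - u x₁)
      have h₂ := min_le_right (u x₁) (M - u x₁)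
      constructor <;> linarith [hux₁.1, hux₁.2]⟩
  have hx₁ω : ω ∈ 𝓝 x₁ := hω.mem_nhds (hrω hx₁)
  have hgrad : ContinuousAt (gradient u) x₁ :=
    (InnerProductSpace.toDual ℝ _).symm.continuous.continuousAt.comp
      ((hreg.fderiv_of_isOpen (m := 1) hω (by norm_num)).continuousOn.continuousAt hx₁ω)
  obtain ⟨ρ, hρ, hball⟩ := Metric.eventually_nhds_iff_ball.1
    ((Metric.isOpen_ball.eventually_mem hx₁).and
      (((hreg.continuousOn.continuousAt hx₁ω).eventually_mem (Ioo_mem_nhds hδ₁.1 hδ₁.2)).and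
        (hgrad.eventually_mem (Metric.closedBall_mem_nhds _ (by norm_num : (0 : ℝ) < 1 / 8)))))
  obtain ⟨φ, hφ, hφc, hφb, t₀, ht₀, hJ⟩ := exists_second_variation_neg (u := u)
    (p₀ := gradient u x₁) hρ (fun x hx => hωΩ (hrω (hball x hx).1))
    (fun x hx => (hreg.contDiffAt (hω.mem_nhds (hrω (hball x hx).1))).differentiableAt
      (by norm_num))
    (fun x hx => by simpa [dist_eq_norm] using (hball x hx).2.2)
  obtain ⟨t₁, ht₁, hconc⟩ := hu.exists_forall_add_mul Metric.isOpen_ball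
    (hu.continuousOn Metric.isOpen_ball) Metric.isOpen_ball hm
    (fun x d h₁ h₂ => hmid x d (hball _ h₁).1 (hball _ h₂).1) hφ hφc hφb
  obtain ⟨C, hC0, hC⟩ := hφc.exists_nonneg_norm_le hφ.continuous
  have hle : ∀ t : ℝ, |t| ≤ t₁ → |t| ≤ δ / (C + 1) → J u ≤ J fun x => u x + t * φ x := by
    refine fun t h₁ h₂ => hmin _ (hconc t h₁) fun x hx => ?_
    by_cases hxφ : x ∈ tsupport φ
    · have hux := (hball x (hφb hxφ)).2.1
      have hb : |t * φ x| ≤ δ := by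
        rw [le_div_iff₀ (by positivity)] at h₂
        rw [abs_mul]
        nlinarith [mul_le_mul_of_nonneg_left (hC x) (abs_nonneg t), abs_nonneg t,
          Real.norm_eq_abs (φ x)]
      have := abs_le.1 hb
      constructor <;> linarith [hux.1, hux.2]
    · simpa [image_eq_zero_of_notMem_tsupport hxφ] using huM x hx
  set t := min t₀ (min t₁ (δ / (C + 1))) with ht
  have htpos : 0 < t := lt_min ht₀ (lt_min ht₁ (by positivity))
  have htabs : |t| = t := abs_of_pos htpos
  have htt₁ : t ≤ t₁ := (min_le_right _ _).trans (min_le_left _ _)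
  have httδ : t ≤ δ / (C + 1) := (min_le_right _ _).trans (min_le_right _ _)
  have h₁ := hle t (by rwa [htabs]) (by rwa [htabs])
  have h₂ := hle (-t) (by rwa [abs_neg, htabs]) (by rwa [abs_neg, htabs])
  linarith [hJ t htpos (min_le_left _ _)]

end Main
end
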